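/- arXiv:2510.12261 — 5 statements merged into one kernel-verified Lean document; each statement's English description precedes it below -/
import Mathlib

section
/- The subgroup G of the unit group of the matrix ring generated by the units λ·C_t and U_t for 1 ≤ t ≤ ℓ and D_{st} for 1 ≤ s < t ≤ ℓ is isomorphic, as a group, to the symplectic group Sp_{2ℓ}(ZMod r) (Mathlib's Matrix.symplecticGroup (Fin ℓ) (ZMod r)). -/
/-!
An operator on the functions of `(ZMod r) ^ ℓ` implements a symplectic matrix if conjugation by it
permutes the Weyl operators as that matrix permutes phase space. By Schur's lemma the operator is
determined up to a scalar by the matrix, and the scalar is fixed by requiring the determinant to be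
the square of the determinant on the odd functions: all functions form a space of dimension `r ^ ℓ =
2m + 1` and the odd ones a space of dimension `m`, so an admissible scalar satisfies `c ^ (2m + 1) =
c ^ (2m)`. The admissible pairs (operator, symplectic matrix) thus form the graph of an injective
homomorphism on a subgroup of `Sp`. The operators `λC_t`, `U_t` and `D_{st}` are admissible and
implement matrices that generate `Sp`, which makes the group generated by them isomorphic to `Sp`.
-/

open Matrix
open scoped Kronecker

section SymplecticGeneration

variable {l R : Type*} [DecidableEq l] [CommRing R]

/-- The upper unipotent block matrix `[1, B; 0, 1]`, symplectic for symmetric `B`. -/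
def upperUnipotent (B : Matrix l l R) : Matrix (l ⊕ l) (l ⊕ l) R := fromBlocks 1 B 0 1

/-- The lower unipotent block matrix `[1, 0; B, 1]`, symplectic for symmetric `B`. -/
def lowerUnipotent (B : Matrix l l R) : Matrix (l ⊕ l) (l ⊕ l) R := fromBlocks 1 0 B 1

/-- The Weyl element that acts as `J` on the hyperbolic planes indexed by `T` and as the identity
on the others. -/
def partialJ (R : Type*) [CommRing R] (T : Finset l) : Matrix (l ⊕ l) (l ⊕ l) R :=
  fromBlocks (diagonal fun i => if i ∈ T then 0 else 1) (diagonal fun i => if i ∈ T then -1 else 0)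
    (diagonal fun i => if i ∈ T then 1 else 0) (diagonal fun i => if i ∈ T then 0 else 1)

lemma lowerUnipotent_zero : lowerUnipotent (0 : Matrix l l R) = 1 := fromBlocks_one

lemma partialJ_empty : partialJ R (∅ : Finset l) = 1 := by
  simp [partialJ]

variable [Fintype l]

/-- The element `[A, 0; 0, A⁻ᵀ]` of the Siegel Levi subgroup attached to an invertible `A`. -/
noncomputable def leviMatrix (A : Matrix l l R) : Matrix (l ⊕ l) (l ⊕ l) R :=
  fromBlocks A 0 0 A⁻¹ᵀ

lemma upperUnipotent_mem_symplecticGroup {B : Matrix l l R} (hB : B.IsSymm) :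
    upperUnipotent B ∈ symplecticGroup l R := by
  rw [upperUnipotent, SymplecticGroup.fromBlocks_mem_iff]
  simp [hB.eq]

lemma lowerUnipotent_mem_symplecticGroup {B : Matrix l l R} (hB : B.IsSymm) :
    lowerUnipotent B ∈ symplecticGroup l R := by
  rw [lowerUnipotent, SymplecticGroup.fromBlocks_mem_iff]
  simp [hB.eq]

lemma lowerUnipotent_add (A B : Matrix l l R) :
    lowerUnipotent (A + B) = lowerUnipotent A * lowerUnipotent B := by
  simp [lowerUnipotent, fromBlocks_multiply]

lemma lowerUnipotent_mul_neg (B : Matrix l l R) :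
    lowerUnipotent B * lowerUnipotent (-B) = 1 := by
  rw [← lowerUnipotent_add, add_neg_cancel, lowerUnipotent_zero]

lemma upperUnipotent_mul_neg (B : Matrix l l R) :
    upperUnipotent B * upperUnipotent (-B) = 1 := by
  simp [upperUnipotent, fromBlocks_multiply]

lemma upperUnipotent_eq_J_mul_lowerUnipotent_mul (B : Matrix l l R) :
    upperUnipotent B = J l R * lowerUnipotent (-B) * (J l R * J l R * J l R) := by
  simp [upperUnipotent, lowerUnipotent, J, fromBlocks_multiply]

lemma partialJ_mem_symplecticGroup (T : Finset l) : partialJ R T ∈ symplecticGroup l R := by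
  rw [partialJ, SymplecticGroup.fromBlocks_mem_iff]
  simp only [diagonal_transpose, diagonal_mul_diagonal, diagonal_sub, ← diagonal_one,
    diagonal_injective.eq_iff]
  refine ⟨?_, ?_, ?_⟩ <;> ext i <;> by_cases hi : i ∈ T <;> simp [hi]

lemma partialJ_insert {T : Finset l} {t : l} (ht : t ∉ T) :
    partialJ R (insert t T) = partialJ R {t} * partialJ R T := by
  simp only [partialJ, fromBlocks_multiply, diagonal_mul_diagonal, diagonal_add]
  congr 2 <;> (ext i; by_cases h : i = t <;> by_cases h' : i ∈ T <;> simp_all)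

lemma partialJ_univ : partialJ R (Finset.univ : Finset l) = J l R := by
  simp [partialJ, J, ← diagonal_one]

lemma leviMatrix_mul (A B : Matrix l l R) : leviMatrix (A * B) = leviMatrix A * leviMatrix B := by
  simp [leviMatrix, fromBlocks_multiply, Matrix.mul_inv_rev]

lemma leviMatrix_eq_of_isSymm {A : Matrix l l R} (hA : A.IsSymm) (hu : IsUnit A.det) :
    leviMatrix A = upperUnipotent A * lowerUnipotent (-A⁻¹) * upperUnipotent A * J l R := by
  have hAi : A⁻¹ᵀ = A⁻¹ := by rw [transpose_nonsing_inv, hA.eq]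
  simp [upperUnipotent, lowerUnipotent, leviMatrix, J, fromBlocks_multiply, hAi,
    mul_nonsing_inv _ hu, nonsing_inv_mul _ hu]

lemma eq_leviMatrix_mul_upperUnipotent {A B D : Matrix l l R} (hA : IsUnit A.det)
    (h : fromBlocks A B 0 D ∈ symplecticGroup l R) :
    fromBlocks A B 0 D = leviMatrix A * upperUnipotent (A⁻¹ * B) ∧ (A⁻¹ * B).IsSymm := by
  obtain ⟨-, hBD, hAD⟩ := SymplecticGroup.fromBlocks_mem_iff.1 h
  have hD : D = A⁻¹ᵀ := by
    rw [transpose_zero, Matrix.zero_mul, sub_zero] at hAD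
    rw [transpose_nonsing_inv, inv_eq_right_inv hAD]
  refine ⟨?_, ?_⟩
  · simp [leviMatrix, upperUnipotent, fromBlocks_multiply, hD, mul_nonsing_inv_cancel_left _ _ hA]
  · rw [hD, transpose_transpose] at hBD
    rw [IsSymm, transpose_mul, hBD]

lemma isSymm_mul_inv {A C : Matrix l l R} (hA : IsUnit A.det) (h : Aᵀ * C = Cᵀ * A) :
    (C * A⁻¹).IsSymm := by
  have hAt : IsUnit Aᵀ.det := by rwa [det_transpose]
  calc (C * A⁻¹)ᵀ = Aᵀ⁻¹ * (Cᵀ * A) * A⁻¹ := by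
        rw [transpose_mul, transpose_nonsing_inv, mul_assoc, mul_assoc, mul_nonsing_inv _ hA,
          mul_one]
    _ = C * A⁻¹ := by rw [← h, nonsing_inv_mul_cancel_left _ _ hAt]

lemma exists_eq_lower_mul_levi_mul_upper {A B C D : Matrix l l R} (hA : IsUnit A.det)
    (h : fromBlocks A B C D ∈ symplecticGroup l R) :
    ∃ X Y : Matrix l l R, X.IsSymm ∧ Y.IsSymm ∧
      fromBlocks A B C D = lowerUnipotent X * (leviMatrix A * upperUnipotent Y) := by
  have hX := isSymm_mul_inv hA (SymplecticGroup.fromBlocks_mem_iff.1 h).1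
  have hcell : lowerUnipotent (-(C * A⁻¹)) * fromBlocks A B C D =
      fromBlocks A B 0 (-(C * A⁻¹) * B + D) := by
    simp [lowerUnipotent, fromBlocks_multiply, nonsing_inv_mul_cancel_right _ _ hA]
  obtain ⟨heq, hY⟩ := eq_leviMatrix_mul_upperUnipotent hA
    (hcell ▸ mul_mem (lowerUnipotent_mem_symplecticGroup hX.neg) h)
  refine ⟨_, _, hX, hY, ?_⟩
  rw [← heq, ← hcell, ← mul_assoc, lowerUnipotent_mul_neg, one_mul]

/-- Multiplying by the permutation matrix of the transposition `(i j)` makes a transvection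
symmetric. -/
lemma exists_isSymm_transvection_eq_mul {i j : l} (hij : i ≠ j) (c : R) :
    ∃ P Q : Matrix l l R, P.IsSymm ∧ IsUnit P.det ∧ Q.IsSymm ∧ IsUnit Q.det ∧
      transvection i j c = P * Q := by
  have hswap : IsUnit (Matrix.swap R i j).det :=
    IsUnit.of_mul_eq_one _ (by rw [← det_mul, swap_mul_self, det_one])
  have hP : transvection i j c * Matrix.swap R i j = Matrix.swap R i j + single i i c := by
    have hsingle : single i j c * Matrix.swap R i j = single i i c := by
      ext a b
      by_cases hi : b = i
      · subst hi
        rw [mul_swap_apply_left]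
        simp [single_apply]
      · by_cases hj : b = j
        · subst hj
          rw [mul_swap_apply_right]
          simp [hij, hij.symm]
        · rw [mul_swap_of_ne hi hj]
          simp [Ne.symm hi, Ne.symm hj]
    rw [transvection, add_mul, one_mul, hsingle]
  refine ⟨transvection i j c * Matrix.swap R i j, Matrix.swap R i j, ?_, ?_, isSymm_swap i j,
    hswap, ?_⟩
  · rw [hP]
    exact (isSymm_swap i j).add (transpose_single i i c)
  · rwa [det_mul, det_transvection_of_ne i j hij, one_mul]
  · rw [mul_assoc, swap_mul_self, mul_one]

variable {K : Type*} [Field K]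

lemma leviMatrix_mem_of_isSymm_mem {S : Submonoid (Matrix (l ⊕ l) (l ⊕ l) K)}
    (hS : ∀ A : Matrix l l K, A.IsSymm → IsUnit A.det → leviMatrix A ∈ S)
    {A : Matrix l l K} (hA : A.det ≠ 0) : leviMatrix A ∈ S := by
  refine diagonal_transvection_induction_of_det_ne_zero (leviMatrix · ∈ S) A hA
    (fun D hD => hS _ (isSymm_diagonal D) hD.isUnit) (fun t => ?_) (fun A B _ _ hA hB => ?_)
  · obtain ⟨P, Q, hP, hPu, hQ, hQu, h⟩ := exists_isSymm_transvection_eq_mul t.hij t.c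
    rw [TransvectionStruct.toMatrix, h, leviMatrix_mul]
    exact mul_mem (hS P hP hPu) (hS Q hQ hQu)
  · rw [leviMatrix_mul]
    exact mul_mem hA hB

-- `X = Q * Qᵀ`, where the columns of `Q` form a basis of a complement of the range of `A`.
lemma exists_isSymm_det_add_mul_ne_zero {A C : Matrix l l K} (hsymm : Aᵀ * C = Cᵀ * A)
    (hker : ∀ x, A *ᵥ x = 0 → C *ᵥ x = 0 → x = 0) :
    ∃ X : Matrix l l K, X.IsSymm ∧ (A + X * C).det ≠ 0 := by
  obtain ⟨W, hW⟩ := Submodule.exists_isCompl (LinearMap.range A.mulVecLin)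
  let f := W.subtype ∘ₗ (Module.finBasis K W).equivFun.symm.toLinearMap
  let Q := LinearMap.toMatrix' f
  have hQ (k) : Q *ᵥ k = f k := LinearMap.toMatrix'_mulVec f k
  have hQ_inj {k} (hk : Q *ᵥ k = 0) : k = 0 := by
    rw [hQ] at hk
    exact (Module.finBasis K W).equivFun.symm.map_eq_zero_iff.1 (Subtype.ext hk)
  have hQ_mem (k) : Q *ᵥ k ∈ W := hQ k ▸ Subtype.coe_prop _
  have hQ_surj {w} (hw : w ∈ W) : ∃ k, Q *ᵥ k = w :=
    ⟨(Module.finBasis K W).equivFun ⟨w, hw⟩, by simp [hQ, f]⟩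
  refine ⟨Q * Qᵀ, by rw [IsSymm, transpose_mul, transpose_transpose], fun hdet => ?_⟩
  obtain ⟨x, hx0, hx⟩ := exists_mulVec_eq_zero_iff.2 hdet
  have hAx : A *ᵥ x = Q *ᵥ -(Qᵀ *ᵥ (C *ᵥ x)) := by
    rw [add_mulVec] at hx
    rw [mulVec_neg, mulVec_mulVec, mulVec_mulVec, eq_neg_of_add_eq_zero_left hx]
  have hAx0 : A *ᵥ x = 0 :=
    Submodule.disjoint_def.1 hW.disjoint _ ⟨x, rfl⟩ (hAx ▸ hQ_mem _)
  have hQCx : Qᵀ *ᵥ (C *ᵥ x) = 0 := neg_eq_zero.1 (hQ_inj (hAx ▸ hAx0))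
  have hACx : Aᵀ *ᵥ (C *ᵥ x) = 0 := by
    rw [mulVec_mulVec, hsymm, ← mulVec_mulVec, hAx0, mulVec_zero]
  refine hx0 (hker x hAx0 (dotProduct_eq_zero _ fun z => ?_))
  obtain ⟨_, ⟨u, rfl⟩, w, hw, rfl⟩ :=
    Submodule.mem_sup.1 (hW.sup_eq_top ▸ Submodule.mem_top (x := z))
  obtain ⟨k, rfl⟩ := hQ_surj hw
  rw [mulVecLin_apply, dotProduct_add, dotProduct_mulVec, dotProduct_mulVec, ← mulVec_transpose,
    ← mulVec_transpose, hACx, hQCx, zero_dotProduct, zero_dotProduct, add_zero]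

lemma exists_isSymm_det_ne_zero {A B C D : Matrix l l K}
    (h : fromBlocks A B C D ∈ symplecticGroup l K) :
    ∃ X : Matrix l l K, X.IsSymm ∧ (A + X * C).det ≠ 0 := by
  refine exists_isSymm_det_add_mul_ne_zero (SymplecticGroup.fromBlocks_mem_iff.1 h).1
    fun x hA hC => ?_
  have hinj := mulVec_injective_of_isUnit
    ((isUnit_iff_isUnit_det _).2 (SymplecticGroup.symplectic_det h))
  have hx : Sum.elim x (0 : l → K) = 0 := hinj <| by
    rw [fromBlocks_mulVec, mulVec_zero]
    simp [hA, hC]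
  simpa using congrArg (· ∘ Sum.inl) hx

theorem symplecticGroup_le_of_J_mem_of_lowerUnipotent_mem
    {S : Submonoid (Matrix (l ⊕ l) (l ⊕ l) K)} (hJ : J l K ∈ S)
    (hlower : ∀ B : Matrix l l K, B.IsSymm → lowerUnipotent B ∈ S) : symplecticGroup l K ≤ S := by
  have hupper (B : Matrix l l K) (hB : B.IsSymm) : upperUnipotent B ∈ S := by
    rw [upperUnipotent_eq_J_mul_lowerUnipotent_mul]
    exact mul_mem (mul_mem hJ (hlower _ hB.neg)) (mul_mem (mul_mem hJ hJ) hJ)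
  have hlevi {A : Matrix l l K} (hA : A.det ≠ 0) : leviMatrix A ∈ S := by
    refine leviMatrix_mem_of_isSymm_mem (fun A hA hu => ?_) hA
    rw [leviMatrix_eq_of_isSymm hA hu]
    have hAi : A⁻¹.IsSymm := by rw [IsSymm, transpose_nonsing_inv, hA.eq]
    exact mul_mem (mul_mem (mul_mem (hupper A hA) (hlower _ hAi.neg)) (hupper A hA)) hJ
  intro M hM
  obtain ⟨A, B, C, D, rfl⟩ : ∃ A B C D, M = fromBlocks A B C D :=
    ⟨_, _, _, _, (fromBlocks_toBlocks M).symm⟩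
  obtain ⟨X, hX, hdet⟩ := exists_isSymm_det_ne_zero hM
  have hcell : upperUnipotent X * fromBlocks A B C D =
      fromBlocks (A + X * C) (B + X * D) C D := by
    simp [upperUnipotent, fromBlocks_multiply]
  obtain ⟨Y, Z, hY, hZ, heq⟩ := exists_eq_lower_mul_levi_mul_upper hdet.isUnit
    (hcell ▸ mul_mem (upperUnipotent_mem_symplecticGroup hX) hM)
  have hM' : fromBlocks A B C D = upperUnipotent (-X) *
      (lowerUnipotent Y * (leviMatrix (A + X * C) * upperUnipotent Z)) := by
    rw [← heq, ← hcell, ← mul_assoc, ← neg_neg X, neg_neg (-X), upperUnipotent_mul_neg, one_mul]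
  rw [hM']
  exact mul_mem (hupper _ hX.neg) (mul_mem (hlower _ hY) (mul_mem (hlevi hdet) (hupper _ hZ)))

end SymplecticGeneration

section SymplecticGenerators

variable {l R : Type*} [LinearOrder l]

lemma isSymm_mem_of_single_mem [Finite l] [AddCommMonoid R] {T : AddSubmonoid (Matrix l l R)}
    (hdiag : ∀ i c, single i i c ∈ T) (hoff : ∀ i j c, i < j → single i j c + single j i c ∈ T)
    {B : Matrix l l R} (hB : B.IsSymm) : B ∈ T := by
  have := Fintype.ofFinite l
  let U : Matrix l l R := of fun i j => if i < j then B i j else 0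
  have hB_eq : B = U + Uᵀ + diagonal B.diag := by
    ext i j
    rcases lt_trichotomy i j with h | rfl | h
    · simp [U, h, h.not_gt, h.ne]
    · simp [U]
    · simp [U, h, h.not_gt, h.ne', hB.apply]
  have hU_eq : U + Uᵀ = ∑ i, ∑ j, (single i j (U i j) + single j i (U i j)) := by
    conv_lhs => rw [matrix_eq_sum_single U]
    simp only [transpose_sum, transpose_single, ← Finset.sum_add_distrib]
  rw [hB_eq, hU_eq, ← sum_single_eq_diagonal]
  refine add_mem (sum_mem fun i _ => sum_mem fun j _ => ?_) (sum_mem fun i _ => hdiag i _)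
  by_cases h : i < j
  · exact hoff i j _ h
  · simp [U, h]

lemma isSymm_single_self [Zero R] (t : l) (c : R) : (single t t c).IsSymm := transpose_single t t c

lemma isSymm_single_add_single [AddCommMonoid R] (s t : l) (c : R) :
    (single s t c + single t s c).IsSymm := by
  simp [IsSymm, add_comm]

variable [Fintype l]

/-- The standard generators of the symplectic group over a prime field: the partial Weyl elements
of the hyperbolic planes and the lower unipotents of the elementary symmetric matrices. -/
def symplecticGenerator (R : Type*) [CommRing R] :
    l ⊕ l ⊕ {x : l × l // x.1 < x.2} → symplecticGroup l R
  | .inl t => ⟨partialJ R {t}, partialJ_mem_symplecticGroup _⟩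
  | .inr (.inl t) => ⟨lowerUnipotent (single t t 1),
      lowerUnipotent_mem_symplecticGroup (isSymm_single_self t 1)⟩
  | .inr (.inr ⟨(s, t), _⟩) => ⟨lowerUnipotent (single s t 1 + single t s 1),
      lowerUnipotent_mem_symplecticGroup (isSymm_single_add_single s t 1)⟩

lemma lowerUnipotent_mem_of_single_mem {p : ℕ} [NeZero p]
    {S : Submonoid (Matrix (l ⊕ l) (l ⊕ l) (ZMod p))}
    (hdiag : ∀ t, lowerUnipotent (single t t 1) ∈ S)
    (hoff : ∀ s t, s < t → lowerUnipotent (single s t 1 + single t s 1) ∈ S)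
    {B : Matrix l l (ZMod p)} (hB : B.IsSymm) : lowerUnipotent B ∈ S := by
  let T : AddSubmonoid (Matrix l l (ZMod p)) :=
    { carrier := {B | lowerUnipotent B ∈ S}
      zero_mem' := by
        rw [Set.mem_ofPred_eq, lowerUnipotent_zero]
        exact one_mem S
      add_mem' := fun {A B} hA hB => by
        rw [Set.mem_ofPred_eq, lowerUnipotent_add]
        exact mul_mem hA hB }
  have hsmul (c : ZMod p) {B : Matrix l l (ZMod p)} (hB : B ∈ T) : c • B ∈ T := by
    rw [← ZMod.natCast_zmod_val c, Nat.cast_smul_eq_nsmul]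
    exact nsmul_mem hB _
  refine isSymm_mem_of_single_mem (T := T) (fun t c => ?_) (fun s t c h => ?_) hB
  · simpa using hsmul c (hdiag t)
  · simpa using hsmul c (hoff s t h)

theorem closure_range_symplecticGenerator {p : ℕ} [Fact p.Prime] :
    Subgroup.closure (Set.range (symplecticGenerator (l := l) (ZMod p))) = ⊤ := by
  let S := (Subgroup.closure (Set.range (symplecticGenerator (l := l) (ZMod p)))).toSubmonoid.map
    (symplecticGroup l (ZMod p)).subtype
  have hgen (x) : (symplecticGenerator (l := l) (ZMod p) x : Matrix (l ⊕ l) (l ⊕ l) (ZMod p)) ∈ S :=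
    ⟨_, Subgroup.subset_closure ⟨x, rfl⟩, rfl⟩
  have hpartialJ (T : Finset l) : partialJ (ZMod p) T ∈ S := by
    induction T using Finset.induction with
    | empty => exact partialJ_empty (l := l) (R := ZMod p) ▸ one_mem S
    | insert t T ht ih => exact partialJ_insert (R := ZMod p) ht ▸ mul_mem (hgen (.inl t)) ih
  have hJ : J l (ZMod p) ∈ S := partialJ_univ (l := l) (R := ZMod p) ▸ hpartialJ _
  have hle : symplecticGroup l (ZMod p) ≤ S :=
    symplecticGroup_le_of_J_mem_of_lowerUnipotent_mem hJ
      fun B hB => lowerUnipotent_mem_of_single_mem (fun t => hgen (.inr (.inl t)))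
        (fun s t h => hgen (.inr (.inr ⟨(s, t), h⟩))) hB
  refine (Subgroup.eq_top_iff' _).2 fun M => ?_
  obtain ⟨N, hN, hNM⟩ := hle M.2
  exact Subtype.ext hNM ▸ hN

end SymplecticGenerators

section Update

variable {l R : Type*} [Fintype l] [DecidableEq l] [CommRing R]

lemma update_dotProduct_update (a b : l → R) (t : l) (x y : R) :
    Function.update a t x ⬝ᵥ Function.update b t y = a ⬝ᵥ b - a t * b t + x * y := by
  have hmul (i : l) : Function.update a t x i * Function.update b t y i =
      Function.update (a * b) t (x * y) i := by
    obtain rfl | hi := eq_or_ne i t <;> simp [*]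
  simp only [dotProduct, hmul, Finset.sum_update_of_mem (Finset.mem_univ t), Pi.mul_apply]
  rw [← Finset.erase_eq, ← Finset.add_sum_erase _ _ (Finset.mem_univ t)]
  ring

lemma partialJ_singleton_mulVec (t : l) (a b : l → R) :
    partialJ R {t} *ᵥ Sum.elim a b =
      Sum.elim (Function.update a t (-b t)) (Function.update b t (a t)) := by
  rw [partialJ, fromBlocks_mulVec]
  congr 1 <;> ext i <;> obtain rfl | hi := eq_or_ne i t <;> simp [mulVec_diagonal, *]

end Update

/-- The matrix `c` acting on the coordinate `t` alone. -/
def coordMatrix {l X F : Type*} [Fintype l] [DecidableEq l] [DecidableEq X] [Zero F] (t : l)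
    (c : Matrix X X F) : Matrix (l → X) (l → X) F :=
  of fun η ξ => if ∀ i, i ≠ t → η i = ξ i then c (η t) (ξ t) else 0

section WeylOperators

variable {l R F : Type*} [Fintype l] [CommRing R] [Invertible (2 : R)]

section Defs

variable [DecidableEq R] [CommRing F]

/-- The Weyl operator of `v = (a, b)` on functions of `ξ : l → R`: the translation by `a` composed
with the multiplication by the character `ξ ↦ e (b ⬝ᵥ ξ)`, with the phase normalised by
`e (½ a ⬝ᵥ b)`. -/
def weylOperator (e : AddChar R F) (v : l ⊕ l → R) : Matrix (l → R) (l → R) F :=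
  of fun η ξ => if η = ξ + v ∘ Sum.inl then
    e (v ∘ Sum.inr ⬝ᵥ ξ + ⅟2 * (v ∘ Sum.inl ⬝ᵥ v ∘ Sum.inr)) else 0

/-- The Fourier transform with respect to the pairing `(x, y) ↦ e (x * y)`. -/
def fourierMatrix (e : AddChar R F) : Matrix R R F := of fun x y => e (x * y)

/-- Multiplication by the quadratic phase `ξ ↦ e (½ ξᵀ B ξ)`. -/
def quadraticPhase (e : AddChar R F) (B : Matrix l l R) : Matrix (l → R) (l → R) F :=
  diagonal fun ξ => e (⅟2 * (ξ ⬝ᵥ B *ᵥ ξ))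

lemma weylOperator_injective [Nontrivial F] {e : AddChar R F} (he : e.IsPrimitive) :
    Function.Injective (weylOperator (l := l) e) := by
  classical
  intro v w hvw
  have hinl : v ∘ Sum.inl = w ∘ Sum.inl := by
    have h := congrFun₂ hvw (v ∘ Sum.inl) 0
    simp only [weylOperator, of_apply, zero_add, if_true] at h
    by_contra hne
    rw [if_neg hne] at h
    exact (e.val_isUnit _).ne_zero h
  have hchar (ξ : l → R) : e (v ∘ Sum.inr ⬝ᵥ ξ + ⅟2 * (v ∘ Sum.inl ⬝ᵥ v ∘ Sum.inr)) =
      e (w ∘ Sum.inr ⬝ᵥ ξ + ⅟2 * (w ∘ Sum.inl ⬝ᵥ w ∘ Sum.inr)) := by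
    simpa only [weylOperator, of_apply, ← hinl, if_true] using congrFun₂ hvw (ξ + v ∘ Sum.inl) ξ
  have hinr : v ∘ Sum.inr = w ∘ Sum.inr := by
    ext i
    refine AddChar.to_mulShift_inj_of_isPrimitive he (DFunLike.ext _ _ fun c => ?_)
    have h0 := hchar 0
    have hc := hchar (Pi.single i c)
    simp only [dotProduct_zero, zero_add] at h0
    rw [e.map_add_eq_mul, e.map_add_eq_mul, h0] at hc
    simpa using (e.val_isUnit _).mul_right_cancel hc
  rw [← Sum.elim_comp_inl_inr v, hinl, hinr, Sum.elim_comp_inl_inr]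

end Defs

variable [DecidableEq l] [DecidableEq R] [Fintype R]

section Implements

variable [CommRing F] {e : AddChar R F} {g g' : Matrix (l → R) (l → R) F}
  {M M' : Matrix (l ⊕ l) (l ⊕ l) R}

lemma mul_weylOperator_apply (e : AddChar R F) (v : l ⊕ l → R) (g : Matrix (l → R) (l → R) F)
    (η ξ : l → R) :
    (g * weylOperator e v) η ξ = g η (ξ + v ∘ Sum.inl) *
      e (v ∘ Sum.inr ⬝ᵥ ξ + ⅟2 * (v ∘ Sum.inl ⬝ᵥ v ∘ Sum.inr)) := by
  simp [mul_apply, weylOperator]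

lemma weylOperator_mul_apply (e : AddChar R F) (v : l ⊕ l → R) (g : Matrix (l → R) (l → R) F)
    (η ξ : l → R) :
    (weylOperator e v * g) η ξ =
      e (v ∘ Sum.inr ⬝ᵥ (η - v ∘ Sum.inl) + ⅟2 * (v ∘ Sum.inl ⬝ᵥ v ∘ Sum.inr)) *
        g (η - v ∘ Sum.inl) ξ := by
  simp [mul_apply, weylOperator, ← sub_eq_iff_eq_add]

/-- `g` implements the linear map `M` of phase space if conjugation by `g` carries the Weyl
operator of `v` to the one of `M v`. -/
def Implements (e : AddChar R F) (g : Matrix (l → R) (l → R) F) (M : Matrix (l ⊕ l) (l ⊕ l) R) :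
    Prop :=
  ∀ v, g * weylOperator e v = weylOperator e (M *ᵥ v) * g

namespace Implements

lemma one (e : AddChar R F) : Implements (l := l) e 1 1 := fun v => by
  rw [one_mul, mul_one, one_mulVec]

lemma mul (h : Implements e g M) (h' : Implements e g' M') : Implements e (g * g') (M * M') :=
  fun v => by rw [mul_assoc, h', ← mul_assoc, h, mul_assoc, mulVec_mulVec]

lemma inv {g : (Matrix (l → R) (l → R) F)ˣ} (h : Implements e (g : Matrix _ _ F) M)
    (hM : M * M' = 1) : Implements e ((g⁻¹ : (Matrix (l → R) (l → R) F)ˣ) : Matrix _ _ F) M' :=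
  fun v => by
    rw [Units.inv_mul_eq_iff_eq_mul, ← mul_assoc, h, mulVec_mulVec, hM, one_mulVec, mul_assoc,
      Units.mul_inv, mul_one]

lemma smul (h : Implements e g M) (c : F) : Implements e (c • g) M := fun v => by
  rw [Matrix.smul_mul, Matrix.mul_smul, h v]

lemma eq_one [Nontrivial F] (he : e.IsPrimitive) (h : Implements e 1 M) : M = 1 :=
  mulVec_injective <| funext fun v => by
    rw [one_mulVec]
    exact (weylOperator_injective he (by simpa using h v)).symm

/-- Schur's lemma for the Weyl operators. -/
lemma exists_eq_smul_one [IsDomain F] (he : e.IsPrimitive) (h : Implements e g 1) :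
    ∃ c : F, g = c • 1 := by
  refine ⟨g 0 0, ?_⟩
  ext η ξ
  obtain rfl | hne := eq_or_ne η ξ
  · have hentry := congrFun₂ (h (Sum.elim η 0)) η 0
    rw [mul_weylOperator_apply, weylOperator_mul_apply] at hentry
    simpa using hentry
  · obtain ⟨i, hi⟩ := Function.ne_iff.1 hne
    rw [Matrix.smul_apply, one_apply_ne hne, smul_zero]
    by_contra hg
    refine hi (AddChar.to_mulShift_inj_of_isPrimitive he (DFunLike.ext _ _ fun c => ?_))
    have hentry := congrFun₂ (h (Sum.elim 0 (Pi.single i c))) η ξ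
    rw [one_mulVec, mul_weylOperator_apply, weylOperator_mul_apply, mul_comm (g _ _)] at hentry
    simp only [Sum.elim_comp_inl, Sum.elim_comp_inr, zero_dotProduct, mul_zero, add_zero, sub_zero,
      single_dotProduct] at hentry
    simpa only [AddChar.mulShift_apply, mul_comm _ c] using (mul_right_cancel₀ hg hentry).symm

end Implements

lemma implements_quadraticPhase (e : AddChar R F) {B : Matrix l l R} (hB : B.IsSymm) :
    Implements e (quadraticPhase e B) (lowerUnipotent B) := by
  intro v
  ext η ξ
  rw [mul_weylOperator_apply, weylOperator_mul_apply]
  obtain ⟨a, b, rfl⟩ : ∃ a b, v = Sum.elim a b := ⟨_, _, (Sum.elim_comp_inl_inr v).symm⟩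
  simp only [lowerUnipotent, quadraticPhase, fromBlocks_mulVec, Sum.elim_comp_inl,
    Sum.elim_comp_inr, one_mulVec, zero_mulVec, add_zero]
  by_cases hη : η = ξ + a
  · subst hη
    have hξa : ξ ⬝ᵥ B *ᵥ a = B *ᵥ a ⬝ᵥ ξ := dotProduct_comm _ _
    have haξ : a ⬝ᵥ B *ᵥ ξ = B *ᵥ a ⬝ᵥ ξ := by
      rw [dotProduct_mulVec, ← mulVec_transpose, hB.eq]
    simp only [add_sub_cancel_right, diagonal_apply_eq, ← e.map_add_eq_mul]
    congr 1
    simp only [mulVec_add, add_dotProduct, dotProduct_add, hξa, haξ]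
    linear_combination (B *ᵥ a ⬝ᵥ ξ) * invOf_mul_self (2 : R)
  · rw [diagonal_apply_ne _ hη, diagonal_apply_ne _ (mt sub_eq_iff_eq_add.1 hη), zero_mul,
      mul_zero]

lemma implements_coordMatrix_fourierMatrix (e : AddChar R F) (t : l) :
    Implements e (coordMatrix t (fourierMatrix e)) (partialJ R {t}) := by
  intro v
  ext η ξ
  rw [mul_weylOperator_apply, weylOperator_mul_apply]
  obtain ⟨a, b, rfl⟩ : ∃ a b, v = Sum.elim a b := ⟨_, _, (Sum.elim_comp_inl_inr v).symm⟩
  simp only [partialJ_singleton_mulVec, coordMatrix, of_apply, Sum.elim_comp_inl,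
    Sum.elim_comp_inr]
  have hiff : (∀ i, i ≠ t → (η - Function.update a t (-b t)) i = ξ i) ↔
      ∀ i, i ≠ t → η i = (ξ + a) i :=
    forall₂_congr fun i hi => by
      rw [Pi.sub_apply, Function.update_of_ne hi, sub_eq_iff_eq_add, Pi.add_apply]
  by_cases hη : ∀ i, i ≠ t → η i = (ξ + a) i
  · have hη_eq : η - Function.update a t (-b t) = Function.update ξ t (η t + b t) := by
      ext i
      obtain rfl | hi := eq_or_ne i t
      · simp
      · simp [hi, hη i hi]
    rw [if_pos hη, if_pos (hiff.2 hη), hη_eq, update_dotProduct_update, update_dotProduct_update]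
    simp only [fourierMatrix, of_apply, Function.update_self, Pi.add_apply, ← e.map_add_eq_mul]
    congr 1
    linear_combination (a t * b t) * invOf_mul_self (2 : R)
  · rw [if_neg hη, if_neg (mt hiff.1 hη), zero_mul, mul_zero]

end Implements

end WeylOperators

section HalfSystems

variable {X : Type*} [AddCommGroup X]

/-- A set of representatives of the nonzero elements of `X` modulo sign, where `x ≠ -x` for
`x ≠ 0`. -/
structure IsHalfSystem (H : Finset X) : Prop where
  neg_notMem : ∀ x ∈ H, -x ∉ H
  mem_or_neg_mem : ∀ x, x ≠ 0 → x ∈ H ∨ -x ∈ H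

lemma eq_zero_of_eq_neg_of_odd_card [Fintype X] (hX : Odd (Fintype.card X)) {x : X}
    (hx : x = -x) : x = 0 := by
  have h2 : 2 • x = 0 := by rw [two_nsmul, ← eq_neg_iff_add_eq_zero, ← hx]
  exact AddMonoid.addOrderOf_eq_one_iff.1 <| Nat.eq_one_of_dvd_coprimes hX.coprime_two_left
    (addOrderOf_dvd_of_nsmul_eq_zero h2) addOrderOf_dvd_card

lemma exists_isHalfSystem [Fintype X] (hX : Odd (Fintype.card X)) :
    ∃ H : Finset X, IsHalfSystem H := by
  let e := Fintype.equivFin X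
  refine ⟨Finset.univ.filter fun x => e x < e (-x), fun x hx => ?_, fun x hx => ?_⟩
  · simp only [Finset.mem_filter, Finset.mem_univ, true_and, neg_neg, not_lt] at *
    exact hx.le
  · simp only [Finset.mem_filter, Finset.mem_univ, true_and, neg_neg]
    exact lt_or_gt_of_ne fun h => hx (eq_zero_of_eq_neg_of_odd_card hX (e.injective h))

namespace IsHalfSystem

variable {H : Finset X}

lemma zero_notMem (hH : IsHalfSystem H) : (0 : X) ∉ H :=
  fun h => hH.neg_notMem 0 h (by rwa [neg_zero])

variable [Fintype X]

lemma prod_eq (hH : IsHalfSystem H) {M : Type*} [CommMonoid M] (f : X → M) :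
    ∏ x, f x = f 0 * ((∏ x ∈ H, f x) * ∏ x ∈ H, f (-x)) := by
  classical
  have hdisj : Disjoint H (H.image Neg.neg) := by
    rw [Finset.disjoint_left]
    rintro _ hx hx'
    obtain ⟨y, hy, rfl⟩ := Finset.mem_image.1 hx'
    exact hH.neg_notMem y hy hx
  have huniv : (Finset.univ : Finset X) = insert 0 (H ∪ H.image Neg.neg) := by
    refine (Finset.eq_univ_iff_forall.2 fun x => ?_).symm
    obtain rfl | hx := eq_or_ne x 0
    · exact Finset.mem_insert_self _ _
    · refine Finset.mem_insert_of_mem (Finset.mem_union.2 ?_)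
      exact (hH.mem_or_neg_mem x hx).imp_right fun h => Finset.mem_image.2 ⟨-x, h, neg_neg x⟩
  rw [huniv, Finset.prod_insert (by simp [hH.zero_notMem]), Finset.prod_union hdisj,
    Finset.prod_image neg_injective.injOn]

lemma card_eq (hH : IsHalfSystem H) : Fintype.card X = 2 * H.card + 1 := by
  have h := hH.prod_eq fun _ => Multiplicative.ofAdd 1
  simp only [Finset.prod_const, ← ofAdd_nsmul, ← ofAdd_add, smul_eq_mul, mul_one] at h
  rw [← Finset.card_univ, Multiplicative.ofAdd.injective h]
  ring

end IsHalfSystem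

end HalfSystems

lemma linearMap_det_eq_of_semiconj {R V W : Type*} [CommRing R] [AddCommGroup V] [Module R V]
    [AddCommGroup W] [Module R W] (E : V ≃ₗ[R] W) {f : Module.End R V} {g : Module.End R W}
    (h : ∀ v, E (f v) = g (E v)) : LinearMap.det f = LinearMap.det g := by
  rw [← LinearMap.det_conj f E]
  congr 1
  ext w
  simp [h]

section OddFunctions

variable {F X : Type*} [Field F] [AddCommGroup X] [Fintype X] [DecidableEq X]
  {A B : Matrix X X F}

variable (F X) in
/-- The matrix of the operator `f ↦ f ∘ (-·)` on functions `X → F`. -/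
def negMatrix : Matrix X X F := (Equiv.neg X).permMatrix F

lemma negMatrix_mulVec (f : X → F) : negMatrix F X *ᵥ f = f ∘ Neg.neg := by
  rw [negMatrix, permMatrix_mulVec]
  rfl

lemma commute_negMatrix_iff :
    Commute (negMatrix F X) A ↔ ∀ x y, A (-x) (-y) = A x y := by
  have hentries : Commute (negMatrix F X) A ↔ ∀ x y, A (-x) y = A x (-y) := by
    simp [Commute, SemiconjBy, ← Matrix.ext_iff, negMatrix, PEquiv.toMatrix_toPEquiv_mul,
      PEquiv.mul_toMatrix_toPEquiv, Equiv.Perm.permMatrix]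
  rw [hentries]
  exact forall_congr' fun x =>
    ⟨fun h y => by rw [h, neg_neg], fun h y => by rw [← h (-y), neg_neg]⟩

variable (F X) in
/-- The functions `g - g ∘ (-·)`. In characteristic two these are still required to vanish at the
points `x = -x`, unlike the solutions of `f (-x) = -f x`. -/
def oddFunctions : Submodule F (X → F) := LinearMap.range (1 - negMatrix F X).mulVecLin

lemma mem_oddFunctions {f : X → F} :
    f ∈ oddFunctions F X ↔ ∃ g : X → F, ∀ x, f x = g x - g (-x) := by
  simp [oddFunctions, negMatrix_mulVec, funext_iff, eq_comm]

lemma apply_neg_of_mem_oddFunctions {f : X → F} (hf : f ∈ oddFunctions F X) (x : X) :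
    f (-x) = -f x := by
  obtain ⟨g, hg⟩ := mem_oddFunctions.1 hf
  rw [hg, hg, neg_neg, neg_sub]

lemma apply_zero_of_mem_oddFunctions {f : X → F} (hf : f ∈ oddFunctions F X) : f 0 = 0 := by
  obtain ⟨g, hg⟩ := mem_oddFunctions.1 hf
  rw [hg, neg_zero, sub_self]

lemma mulVec_mem_oddFunctions (hA : Commute (negMatrix F X) A) :
    ∀ f ∈ oddFunctions F X, A.mulVecLin f ∈ oddFunctions F X := by
  rintro _ ⟨g, rfl⟩
  refine ⟨A *ᵥ g, ?_⟩
  rw [mulVecLin_apply, mulVecLin_apply, mulVecLin_apply, mulVec_mulVec, mulVec_mulVec, sub_mul,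
    mul_sub, hA.eq, one_mul, mul_one]

/-- The action on the odd functions of a matrix that commutes with `x ↦ -x`. -/
def oddAction (A : Matrix X X F) (hA : Commute (negMatrix F X) A) :
    Module.End F (oddFunctions F X) :=
  A.mulVecLin.restrict (mulVec_mem_oddFunctions hA)

lemma oddAction_apply (hA : Commute (negMatrix F X) A) (f : oddFunctions F X) :
    (oddAction A hA f : X → F) = A *ᵥ f := rfl

lemma oddAction_mul (hA : Commute (negMatrix F X) A) (hB : Commute (negMatrix F X) B) :
    oddAction (A * B) (hA.mul_right hB) = oddAction A hA * oddAction B hB :=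
  LinearMap.ext fun f => Subtype.ext (mulVec_mulVec (f : X → F) A B).symm

lemma oddAction_eq_smul_one {hA : Commute (negMatrix F X) A} {c : F}
    (h : ∀ f ∈ oddFunctions F X, A *ᵥ f = c • f) : oddAction A hA = c • 1 :=
  LinearMap.ext fun f => Subtype.ext (h f f.2)

namespace IsHalfSystem

variable {H : Finset X}

lemma eq_zero_of_mem_oddFunctions (hH : IsHalfSystem H) {f : X → F} (hf : f ∈ oddFunctions F X)
    (h : ∀ x ∈ H, f x = 0) : f = 0 := by
  ext x
  obtain rfl | hx := eq_or_ne x 0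
  · exact apply_zero_of_mem_oddFunctions hf
  · obtain hx | hx := hH.mem_or_neg_mem x hx
    · exact h x hx
    · rw [← neg_neg x, apply_neg_of_mem_oddFunctions hf, h _ hx, neg_zero, Pi.zero_apply]

/-- An odd function is determined by its arbitrary values on a half-system. -/
noncomputable def oddFunctionsEquiv (hH : IsHalfSystem H) : oddFunctions F X ≃ₗ[F] (H → F) :=
  LinearEquiv.ofBijective (LinearMap.funLeft F F Subtype.val ∘ₗ (oddFunctions F X).subtype) <| by
    constructor
    · refine (injective_iff_map_eq_zero _).2 fun f hf => Subtype.ext ?_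
      exact hH.eq_zero_of_mem_oddFunctions f.2 fun x hx => congrFun hf ⟨x, hx⟩
    · intro p
      let g : X → F := fun x => if h : x ∈ H then p ⟨x, h⟩ else 0
      refine ⟨⟨fun x => g x - g (-x), mem_oddFunctions.2 ⟨g, fun _ => rfl⟩⟩, ?_⟩
      ext ⟨x, hx⟩
      simp [g, LinearMap.funLeft_apply, hx, hH.neg_notMem x hx]

lemma oddFunctionsEquiv_apply (hH : IsHalfSystem H) (f : oddFunctions F X) (x : H) :
    hH.oddFunctionsEquiv f x = (f : X → F) x := rfl

end IsHalfSystem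

variable (F) in
lemma card_eq_two_mul_finrank_oddFunctions_add_one (hX : Odd (Fintype.card X)) :
    Fintype.card X = 2 * Module.finrank F (oddFunctions F X) + 1 := by
  obtain ⟨H, hH⟩ := exists_isHalfSystem hX
  rw [hH.oddFunctionsEquiv.finrank_eq, Module.finrank_fintype_fun_eq_card, Fintype.card_coe,
    hH.card_eq]

/-- The condition that singles out one operator among the scalar multiples of an implementer:
the determinant is the square of the determinant on odd functions. -/
structure HasOddDetSq (A : Matrix X X F) : Prop where
  commute : Commute (negMatrix F X) A
  det_eq : A.det = LinearMap.det (oddAction A commute) ^ 2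

namespace HasOddDetSq

lemma one : HasOddDetSq (1 : Matrix X X F) where
  commute := Commute.one_right _
  det_eq := by
    rw [oddAction_eq_smul_one (c := 1) (by simp), one_smul, map_one, det_one, one_pow]

lemma mul (hA : HasOddDetSq A) (hB : HasOddDetSq B) : HasOddDetSq (A * B) where
  commute := hA.commute.mul_right hB.commute
  det_eq := by
    rw [oddAction_mul hA.commute hB.commute, det_mul, hA.det_eq, hB.det_eq, map_mul, mul_pow]

lemma inv {A : (Matrix X X F)ˣ} (hA : HasOddDetSq (A : Matrix X X F)) :
    HasOddDetSq ((A⁻¹ : (Matrix X X F)ˣ) : Matrix X X F) where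
  commute := hA.commute.units_inv_right
  det_eq := by
    have hdet : (A : Matrix X X F).det * ((A⁻¹ : (Matrix X X F)ˣ) : Matrix X X F).det = 1 := by
      rw [← det_mul, Units.mul_inv, det_one]
    have hodd : LinearMap.det (oddAction _ hA.commute) *
        LinearMap.det (oddAction _ hA.commute.units_inv_right) = 1 := by
      rw [← map_mul, ← oddAction_mul, oddAction_eq_smul_one (c := 1) (by simp), one_smul, map_one]
    rw [eq_inv_of_mul_eq_one_right hdet, eq_inv_of_mul_eq_one_right hodd, hA.det_eq, inv_pow]

lemma eq_one_of_smul_one (hX : Odd (Fintype.card X)) {c : F} (hc : c ≠ 0)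
    (h : HasOddDetSq (c • 1 : Matrix X X F)) : c = 1 := by
  have hdet := h.det_eq
  rw [oddAction_eq_smul_one (c := c) (by simp [smul_mulVec]), LinearMap.det_smul, map_one, mul_one,
    det_smul, det_one, mul_one, card_eq_two_mul_finrank_oddFunctions_add_one F hX, pow_succ,
    ← pow_mul, mul_comm 2] at hdet
  exact (mul_eq_left₀ (pow_ne_zero _ hc)).1 hdet

end HasOddDetSq

lemma hasOddDetSq_diagonal (hX : Odd (Fintype.card X)) {d : X → F} (hd : ∀ x, d (-x) = d x)
    (h0 : d 0 = 1) : HasOddDetSq (diagonal d) where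
  commute := commute_negMatrix_iff.2 fun x y => by
    simp [diagonal_apply, hd]
  det_eq := by
    obtain ⟨H, hH⟩ := exists_isHalfSystem hX
    rw [linearMap_det_eq_of_semiconj (g := toLin' (diagonal fun x : H => d x))
      hH.oddFunctionsEquiv fun f => funext fun x => by
        simp [hH.oddFunctionsEquiv_apply, oddAction_apply, mulVec_diagonal]]
    simp only [LinearMap.det_toLin', det_diagonal, hH.prod_eq d, h0, hd, one_mul, sq,
      Finset.prod_coe_sort]

lemma kronecker_one_mulVec {R Y Z : Type*} [CommSemiring R] [Fintype Y] [DecidableEq Y] [Fintype Z]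
    (c : Matrix Z Z R) (f : Z × Y → R) (z : Z) (y : Y) :
    ((c ⊗ₖ (1 : Matrix Y Y R)) *ᵥ f) (z, y) = (c *ᵥ fun z' => f (z', y)) z := by
  simp [mulVec, dotProduct, Fintype.sum_prod_type, one_apply]

section Product

variable {Y Z : Type*} [AddCommGroup Y] [AddCommGroup Z] [Fintype Z] [DecidableEq Z]
  {H : Finset Y}

/-- The values of an odd function on `Z × Y` at `Z × H` and at `Z × {0}`; for a half-system `H` of
`Y` these determine it. -/
def oddFunctionsSplit (e : X ≃+ Z × Y) (H : Finset Y) :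
    oddFunctions F X →ₗ[F] (Z × H → F) × oddFunctions F Z where
  toFun f :=
    (fun p => (f : X → F) (e.symm (p.1, p.2)), ⟨fun z => (f : X → F) (e.symm (z, 0)), by
      obtain ⟨g, hg⟩ := mem_oddFunctions.1 f.2
      refine mem_oddFunctions.2 ⟨fun z => g (e.symm (z, 0)), fun z => ?_⟩
      rw [hg, ← map_neg, Prod.neg_mk, neg_zero]⟩)
  map_add' _ _ := rfl
  map_smul' _ _ := rfl

lemma oddFunctionsSplit_injective (hH : IsHalfSystem H) (e : X ≃+ Z × Y) :
    Function.Injective (oddFunctionsSplit (F := F) e H) := by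
  refine (injective_iff_map_eq_zero _).2 fun f hf => Subtype.ext <| funext fun x => ?_
  have hH_eq (z : Z) (y : Y) (hy : y ∈ H) : (f : X → F) (e.symm (z, y)) = 0 :=
    congrFun (congrArg Prod.fst hf) (z, ⟨y, hy⟩)
  have h0_eq (z : Z) : (f : X → F) (e.symm (z, 0)) = 0 :=
    congrFun (congrArg (Subtype.val ∘ Prod.snd) hf) z
  obtain ⟨⟨z, y⟩, rfl⟩ := e.symm.surjective x
  change (f : X → F) (e.symm (z, y)) = 0
  obtain rfl | hy := eq_or_ne y 0
  · exact h0_eq z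
  · obtain hy | hy := hH.mem_or_neg_mem y hy
    · exact hH_eq z y hy
    · rw [← neg_eq_zero, ← apply_neg_of_mem_oddFunctions f.2, ← map_neg, Prod.neg_mk]
      exact hH_eq _ _ hy

lemma finrank_oddFunctions_eq_of_isHalfSystem [Finite Y] (hX : Odd (Fintype.card X))
    (hH : IsHalfSystem H) (e : X ≃+ Z × Y) : Module.finrank F (oddFunctions F X) =
      Module.finrank F ((Z × H → F) × oddFunctions F Z) := by
  cases nonempty_fintype Y
  have hcard : Fintype.card X = Fintype.card Z * Fintype.card Y := by
    rw [← Fintype.card_prod, Fintype.card_congr e.toEquiv]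
  have hZ : Odd (Fintype.card Z) := (Nat.odd_mul.1 (hcard ▸ hX)).1
  have hfinX := card_eq_two_mul_finrank_oddFunctions_add_one F hX
  have hfinZ := card_eq_two_mul_finrank_oddFunctions_add_one F hZ
  rw [Module.finrank_prod, Module.finrank_fintype_fun_eq_card, Fintype.card_prod,
    Fintype.card_coe]
  rw [hcard, hH.card_eq] at hfinX
  linarith

variable [Finite Y] [DecidableEq Y]

lemma oddFunctionsSplit_oddAction (e : X ≃+ Z × Y) {c : Matrix Z Z F}
    (hc : Commute (negMatrix F Z) c)
    (hA : Commute (negMatrix F X) ((c ⊗ₖ (1 : Matrix Y Y F)).submatrix e e))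
    (f : oddFunctions F X) :
    oddFunctionsSplit e H (oddAction _ hA f) =
      (toLin' (c ⊗ₖ (1 : Matrix H H F))).prodMap (oddAction c hc) (oddFunctionsSplit e H f) := by
  cases nonempty_fintype Y
  have hmul (z : Z) (y : Y) :
      (oddAction _ hA f : X → F) (e.symm (z, y)) =
        (c *ᵥ fun z' => (f : X → F) (e.symm (z', y))) z := by
    rw [oddAction_apply, ← AddEquiv.coe_toEquiv, submatrix_mulVec_equiv, Function.comp_apply,
      AddEquiv.coe_toEquiv, AddEquiv.apply_symm_apply, kronecker_one_mulVec]
    rfl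
  refine Prod.ext (funext fun p => ?_) (Subtype.ext (funext fun z => hmul z 0))
  exact (hmul p.1 p.2).trans (kronecker_one_mulVec c (oddFunctionsSplit e H f).1 p.1 p.2).symm

lemma HasOddDetSq.kronecker_one_submatrix {c : Matrix Z Z F} (hc : HasOddDetSq c)
    (hX : Odd (Fintype.card X)) (e : X ≃+ Z × Y) :
    HasOddDetSq ((c ⊗ₖ (1 : Matrix Y Y F)).submatrix e e) where
  commute := by
    refine commute_negMatrix_iff.2 fun x y => ?_
    simp [one_apply, commute_negMatrix_iff.1 hc.commute]
  det_eq := by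
    cases nonempty_fintype Y
    have hY : Odd (Fintype.card Y) := by
      rw [Fintype.card_congr e.toEquiv, Fintype.card_prod, Nat.odd_mul] at hX
      exact hX.2
    obtain ⟨H, hH⟩ := exists_isHalfSystem hY
    rw [linearMap_det_eq_of_semiconj
      (LinearEquiv.ofInjectiveOfFinrankEq _ (oddFunctionsSplit_injective hH e)
        (finrank_oddFunctions_eq_of_isHalfSystem hX hH e))
      (oddFunctionsSplit_oddAction e hc.commute _)]
    have hdet : ((c ⊗ₖ (1 : Matrix Y Y F)).submatrix e e).det = (c ⊗ₖ (1 : Matrix Y Y F)).det :=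
      det_submatrix_equiv_self e.toEquiv _
    rw [hdet, LinearMap.det_prodMap, LinearMap.det_toLin', det_kronecker, det_kronecker, det_one,
      det_one, one_pow, mul_one, mul_one, Fintype.card_coe, hH.card_eq, hc.det_eq]
    ring

end Product

lemma hasOddDetSq_coordMatrix {l R : Type*} [Fintype l] [DecidableEq l] [AddCommGroup R]
    [Fintype R] [DecidableEq R] {c : Matrix R R F} (hc : HasOddDetSq c)
    (hR : Odd (Fintype.card R)) (t : l) : HasOddDetSq (coordMatrix t c) := by
  let e : (l → R) ≃+ R × ({j // j ≠ t} → R) :=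
    { Equiv.funSplitAt t R with map_add' := fun _ _ => rfl }
  have heq : coordMatrix t c = (c ⊗ₖ (1 : Matrix ({j // j ≠ t} → R) _ F)).submatrix e e := by
    ext η ξ
    have he (ζ : l → R) : e ζ = (ζ t, fun j : {j // j ≠ t} => ζ j) := rfl
    simp [coordMatrix, he, one_apply, funext_iff]
  rw [heq]
  exact hc.kronecker_one_submatrix (by simpa using hR.pow) e

lemma hasOddDetSq_quadraticPhase {l R : Type*} [Fintype l] [DecidableEq l] [CommRing R]
    [Invertible (2 : R)] [Fintype R] [DecidableEq R] (hR : Odd (Fintype.card R))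
    (e : AddChar R F) (B : Matrix l l R) : HasOddDetSq (quadraticPhase e B) :=
  hasOddDetSq_diagonal (by simpa using hR.pow) (fun ξ => by simp [mulVec_neg]) (by simp)

section Fourier

variable {R : Type*} [CommRing R] [Fintype R] [DecidableEq R] {e : AddChar R F}

lemma commute_negMatrix_fourierMatrix (e : AddChar R F) :
    Commute (negMatrix F R) (fourierMatrix e) :=
  commute_negMatrix_iff.2 fun x y => by simp only [fourierMatrix, of_apply, neg_mul_neg]

lemma fourierMatrix_mul_self (he : e.IsPrimitive) :
    fourierMatrix e * fourierMatrix e = (Fintype.card R : F) • negMatrix F R := by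
  ext i j
  have hsum := AddChar.sum_mulShift (i + j) he
  simp only [mul_apply, fourierMatrix, of_apply, ← e.map_add_eq_mul, mul_comm i, ← mul_add, hsum]
  simp [negMatrix, Equiv.Perm.permMatrix, PEquiv.toMatrix_apply, neg_eq_iff_add_eq_zero]

lemma det_fourierMatrix_ne_zero (he : e.IsPrimitive) (hR : (Fintype.card R : F) ≠ 0) :
    (fourierMatrix e).det ≠ 0 := by
  have hdet := congrArg det (fourierMatrix_mul_self he)
  rw [det_mul, det_smul, negMatrix, det_permutation] at hdet
  refine left_ne_zero_of_mul (b := (fourierMatrix e).det) ?_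
  rw [hdet]
  exact mul_ne_zero (pow_ne_zero _ hR) ((Units.isUnit _).map (Int.castRingHom F)).ne_zero

-- Only the square of the determinant on odd functions enters, and the square of the Fourier
-- transform acts on these as the scalar `-|R|`; this is where the value of `c` comes from.
lemma hasOddDetSq_smul_fourierMatrix (hR : Odd (Fintype.card R)) (he : e.IsPrimitive) {c : F}
    (hc : c * (fourierMatrix e).det = (-(Fintype.card R : F)) ^ ((Fintype.card R - 1) / 2)) :
    HasOddDetSq (c • fourierMatrix e) where
  commute := (commute_negMatrix_fourierMatrix e).smul_right c
  det_eq := by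
    have hsq (f) (hf : f ∈ oddFunctions F R) :
        ((c • fourierMatrix e) * (c • fourierMatrix e)) *ᵥ f =
          (c ^ 2 * -(Fintype.card R : F)) • f := by
      rw [Matrix.smul_mul, Matrix.mul_smul, fourierMatrix_mul_self he, smul_mulVec, smul_mulVec,
        smul_mulVec, negMatrix_mulVec, smul_smul, smul_smul]
      ext x
      simp only [Pi.smul_apply, Function.comp_apply, apply_neg_of_mem_oddFunctions hf, smul_eq_mul]
      ring
    have hfin := card_eq_two_mul_finrank_oddFunctions_add_one F hR
    have hhalf : (Fintype.card R - 1) / 2 = Module.finrank F (oddFunctions F R) := by omega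
    rw [hhalf] at hc
    rw [sq, ← map_mul, ← oddAction_mul, oddAction_eq_smul_one hsq, LinearMap.det_smul, map_one,
      mul_one, mul_pow, ← hc, det_smul, hfin, pow_succ, pow_mul, mul_assoc]

end Fourier

end OddFunctions

lemma nonempty_closure_range_mulEquiv {ι A B : Type*} [Group A] [Group B] {Γ : Subgroup (A × B)}
    (hfst : ∀ x ∈ Γ, x.1 = 1 → x.2 = 1) (hsnd : ∀ x ∈ Γ, x.2 = 1 → x.1 = 1) {u : ι → A}
    {v : ι → B} (huv : ∀ i, (u i, v i) ∈ Γ) (hv : Subgroup.closure (Set.range v) = ⊤) :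
    Nonempty (Subgroup.closure (Set.range u) ≃* B) := by
  let K : Subgroup (A × B) := Subgroup.closure (Set.range fun i => (u i, v i))
  have hK : K ≤ Γ := (Subgroup.closure_le _).2 (Set.range_subset_iff.2 huv)
  let f : K →* A := (MonoidHom.fst A B).comp K.subtype
  let g : K →* B := (MonoidHom.snd A B).comp K.subtype
  have hf_inj : Function.Injective f := (injective_iff_map_eq_one f).2 fun x hx =>
    Subtype.ext (Prod.ext hx (hfst x (hK x.2) hx))
  have hg_inj : Function.Injective g := (injective_iff_map_eq_one g).2 fun x hx =>
    Subtype.ext (Prod.ext (hsnd x (hK x.2) hx) hx)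
  have hf_range : f.range = Subgroup.closure (Set.range u) := by
    rw [MonoidHom.range_comp, Subgroup.range_subtype, MonoidHom.map_closure, ← Set.range_comp]
    rfl
  have hg_range : g.range = ⊤ := by
    rw [MonoidHom.range_comp, Subgroup.range_subtype, MonoidHom.map_closure, ← Set.range_comp,
      ← hv]
    rfl
  exact ⟨(MulEquiv.subgroupCongr hf_range).symm.trans <|
    (MonoidHom.ofInjective hf_inj).symm.trans <|
      MulEquiv.ofBijective g ⟨hg_inj, MonoidHom.range_eq_top.1 hg_range⟩⟩

section WeilGraph

variable {l R F : Type*} [Fintype l] [DecidableEq l] [CommRing R] [Invertible (2 : R)] [Fintype R]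
  [DecidableEq R] [Field F] {e : AddChar R F}

/-- The graph of the Weil representation: an operator is paired with the symplectic matrix that it
implements, its scalar being normalised by `HasOddDetSq`. -/
def weilGraph (e : AddChar R F) :
    Subgroup ((Matrix (l → R) (l → R) F)ˣ × symplecticGroup l R) where
  carrier := {x | Implements e x.1.val x.2.val ∧ HasOddDetSq x.1.val}
  one_mem' := ⟨.one e, .one⟩
  mul_mem' hx hy := ⟨hx.1.mul hy.1, hx.2.mul hy.2⟩
  inv_mem' {x} hx := ⟨hx.1.inv (congrArg Subtype.val (mul_inv_cancel x.2)), hx.2.inv⟩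

lemma mem_weilGraph {x : (Matrix (l → R) (l → R) F)ˣ × symplecticGroup l R} :
    x ∈ weilGraph e ↔ Implements e x.1.val x.2.val ∧ HasOddDetSq x.1.val := Iff.rfl

lemma snd_eq_one_of_mem_weilGraph (he : e.IsPrimitive)
    (x : (Matrix (l → R) (l → R) F)ˣ × symplecticGroup l R) (hx : x ∈ weilGraph e)
    (h : x.1 = 1) : x.2 = 1 := by
  have himp := (mem_weilGraph.1 hx).1
  rw [h, Units.val_one] at himp
  exact Subtype.ext (himp.eq_one he)

lemma fst_eq_one_of_mem_weilGraph (hR : Odd (Fintype.card R)) (he : e.IsPrimitive)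
    (x : (Matrix (l → R) (l → R) F)ˣ × symplecticGroup l R) (hx : x ∈ weilGraph e)
    (h : x.2 = 1) : x.1 = 1 := by
  obtain ⟨himp, hdet⟩ := mem_weilGraph.1 hx
  rw [h] at himp
  obtain ⟨c, hc⟩ := himp.exists_eq_smul_one he
  have hc0 : c ≠ 0 := by
    rintro rfl
    exact x.1.ne_zero (by rw [hc, zero_smul])
  rw [hc] at hdet
  have hc1 : c = 1 := hdet.eq_one_of_smul_one (by simpa using hR.pow) hc0
  exact Units.ext (by rw [hc, hc1, one_smul, Units.val_one])

end WeilGraph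

lemma smul_coordMatrix {l X F : Type*} [Fintype l] [DecidableEq l] [DecidableEq X] [MulZeroClass F]
    (t : l) (k : F) (c : Matrix X X F) : k • coordMatrix t c = coordMatrix t (k • c) := by
  ext η ξ
  simp [coordMatrix]

section WeilGenerator

variable {l R F : Type*} [Fintype l] [LinearOrder l] [CommRing R] [Invertible (2 : R)]
  [DecidableEq R]

/-- The operators `c • C_t`, `U_t` and `D_{st}`, in the order of `symplecticGenerator`. -/
def weilGenerator [CommRing F] (e : AddChar R F) (c : F) :
    l ⊕ l ⊕ {x : l × l // x.1 < x.2} → Matrix (l → R) (l → R) F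
  | .inl t => c • coordMatrix t (fourierMatrix e)
  | .inr (.inl t) => quadraticPhase e (single t t 1)
  | .inr (.inr ⟨(s, t), _⟩) => quadraticPhase e (single s t 1 + single t s 1)

lemma implements_weilGenerator [Fintype R] [CommRing F] (e : AddChar R F) (c : F) (i) :
    Implements e (weilGenerator e c i) (symplecticGenerator (l := l) R i : Matrix _ _ R) := by
  obtain t | t | ⟨⟨s, t⟩, -⟩ := i
  · exact (implements_coordMatrix_fourierMatrix e t).smul c
  · exact implements_quadraticPhase e (isSymm_single_self t 1)
  · exact implements_quadraticPhase e (isSymm_single_add_single s t 1)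

variable [Field F] {e : AddChar R F}

lemma hasOddDetSq_weilGenerator [Fintype R] (hR : Odd (Fintype.card R)) (he : e.IsPrimitive)
    {c : F}
    (hc : c * (fourierMatrix e).det = (-(Fintype.card R : F)) ^ ((Fintype.card R - 1) / 2)) (i) :
    HasOddDetSq (weilGenerator (l := l) e c i) := by
  obtain t | t | ⟨⟨s, t⟩, -⟩ := i
  · rw [weilGenerator, smul_coordMatrix]
    exact hasOddDetSq_coordMatrix (hasOddDetSq_smul_fourierMatrix hR he hc) hR t
  · exact hasOddDetSq_quadraticPhase hR e _
  · exact hasOddDetSq_quadraticPhase hR e _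

end WeilGenerator

theorem nonempty_closure_range_mulEquiv_symplecticGroup {l F : Type*} [Fintype l] [LinearOrder l]
    [Field F] {p : ℕ} [Fact p.Prime] [Invertible (2 : ZMod p)] (hp : Odd p)
    {e : AddChar (ZMod p) F} (he : e.IsPrimitive) {c : F}
    (hc : c * (fourierMatrix e).det = (-(p : F)) ^ ((p - 1) / 2))
    {u : l ⊕ l ⊕ {x : l × l // x.1 < x.2} → (Matrix (l → ZMod p) (l → ZMod p) F)ˣ}
    (hu : ∀ i, (u i : Matrix _ _ F) = weilGenerator e c i) :
    Nonempty (Subgroup.closure (Set.range u) ≃* symplecticGroup l (ZMod p)) := by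
  have hcard : Odd (Fintype.card (ZMod p)) := by rwa [ZMod.card]
  refine nonempty_closure_range_mulEquiv (snd_eq_one_of_mem_weilGraph he)
    (fst_eq_one_of_mem_weilGraph hcard he) (fun i => mem_weilGraph.2 ?_)
    closure_range_symplecticGenerator
  rw [hu]
  exact ⟨implements_weilGenerator e c i, hasOddDetSq_weilGenerator hcard he (by rwa [ZMod.card]) i⟩

lemma dotProduct_single_mulVec {l R : Type*} [Fintype l] [DecidableEq l] [CommSemiring R]
    (s t : l) (ξ : l → R) : ξ ⬝ᵥ single s t 1 *ᵥ ξ = ξ s * ξ t := by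
  rw [single_mulVec, one_mul, ← Pi.single, dotProduct_single]

section Entries

variable {l R F : Type*} [Fintype l] [DecidableEq l] [CommRing R] [Invertible (2 : R)]
  [DecidableEq R] [CommRing F]

lemma quadraticPhase_single_self (e : AddChar R F) (t : l) :
    quadraticPhase e (single t t 1) = diagonal fun ξ => e (⅟2 * (ξ t * ξ t)) := by
  simp only [quadraticPhase, dotProduct_single_mulVec]

lemma quadraticPhase_single_add_single (e : AddChar R F) (s t : l) :
    quadraticPhase e (single s t 1 + single t s 1) = diagonal fun ξ => e (ξ s * ξ t) := by
  simp only [quadraticPhase, add_mulVec, dotProduct_add, dotProduct_single_mulVec,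
    fun ξ : l → R => mul_comm (ξ t), ← two_mul, invOf_mul_cancel_left]

end Entries

lemma natCast_val_mul_val_add_div_two {r : ℕ} [NeZero r] [Invertible (2 : ZMod r)] (hr : Odd r)
    (x : ZMod r) : ((x.val * (x.val + r) / 2 : ℕ) : ZMod r) = ⅟2 * (x * x) := by
  have heven : Even (x.val * (x.val + r)) := by
    rw [Nat.even_mul, Nat.even_add]
    have hr' := Nat.not_even_iff_odd.2 hr
    tauto
  obtain ⟨k, hk⟩ := heven.two_dvd
  have hcast := congrArg (Nat.cast (R := ZMod r)) hk
  simp only [Nat.cast_mul, Nat.cast_add, CharP.cast_eq_zero, ZMod.natCast_zmod_val, add_zero,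
    Nat.cast_ofNat] at hcast
  rw [hk, Nat.mul_div_cancel_left _ two_pos, hcast, invOf_mul_cancel_left]

lemma quadraticPhase_zmodChar_single_self {l F : Type*} [Fintype l] [DecidableEq l] [CommRing F]
    {r : ℕ} [NeZero r] [Invertible (2 : ZMod r)] (hr : Odd r) {θ : F} (hθ : θ ^ r = 1) (t : l) :
    quadraticPhase (AddChar.zmodChar r hθ) (single t t 1) =
      diagonal fun ξ => θ ^ ((ξ t).val * ((ξ t).val + r) / 2) := by
  simp only [quadraticPhase_single_self, ← natCast_val_mul_val_add_div_two hr,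
    AddChar.zmodChar_apply']

/-- The group `G` generated by `λC_t`, `U_t` and `D_{st}` is isomorphic to
`Sp_{2ℓ}(ZMod r)`. -/
theorem weil_G_iso_symplectic
    {r : ℕ} [Fact (Nat.Prime r)] (hr : Odd r)
    {𝔽 : Type*} [Field 𝔽] {θ : 𝔽} (hθ : IsPrimitiveRoot θ r)
    {ℓ : ℕ} (hℓ : 1 ≤ ℓ)
    (Cb : Matrix (ZMod r) (ZMod r) 𝔽)
    (hCb : ∀ i j : ZMod r, Cb i j = θ ^ (i * j).val)
    (lam : 𝔽) (hlam : lam = (-(r : 𝔽)) ^ ((r - 1) / 2) * Cb.det⁻¹)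
    (uC uU : Fin ℓ → (Matrix (Fin ℓ → ZMod r) (Fin ℓ → ZMod r) 𝔽)ˣ)
    (uD : Fin ℓ → Fin ℓ → (Matrix (Fin ℓ → ZMod r) (Fin ℓ → ZMod r) 𝔽)ˣ)
    (huC : ∀ t, (uC t : Matrix (Fin ℓ → ZMod r) (Fin ℓ → ZMod r) 𝔽)
      = lam • Matrix.of fun η ξ =>
          if ∀ i, i ≠ t → η i = ξ i then θ ^ (η t * ξ t).val else 0)
    (huU : ∀ t, (uU t : Matrix (Fin ℓ → ZMod r) (Fin ℓ → ZMod r) 𝔽)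
      = Matrix.diagonal fun ξ => θ ^ ((ξ t).val * ((ξ t).val + r) / 2))
    (huD : ∀ s t : Fin ℓ, s < t →
      (uD s t : Matrix (Fin ℓ → ZMod r) (Fin ℓ → ZMod r) 𝔽)
        = Matrix.diagonal fun ξ => θ ^ (ξ s * ξ t).val)
    (G : Subgroup (Matrix (Fin ℓ → ZMod r) (Fin ℓ → ZMod r) 𝔽)ˣ)
    (hG : G = Subgroup.closure (Set.range uC ∪ Set.range uU ∪
      {x | ∃ s t : Fin ℓ, s < t ∧ x = uD s t})) :
    Nonempty (G ≃* Matrix.symplecticGroup (Fin ℓ) (ZMod r)) := by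
  let : Invertible (2 : ZMod r) := (ZMod.unitOfCoprime 2 hr.coprime_two_left).invertible.copy 2 rfl
  let e := AddChar.zmodChar r hθ.pow_eq_one
  have he : e.IsPrimitive := AddChar.zmodChar_primitive_of_primitive_root r hθ
  have hCb_eq : Cb = fourierMatrix e := ext hCb
  have hdet : (fourierMatrix e).det ≠ 0 :=
    det_fourierMatrix_ne_zero he (by simpa using hθ.neZero'.out)
  let u : Fin ℓ ⊕ Fin ℓ ⊕ {x : Fin ℓ × Fin ℓ // x.1 < x.2} → (Matrix _ _ 𝔽)ˣ :=
    Sum.elim uC (Sum.elim uU fun x => uD x.1.1 x.1.2)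
  have hG_eq : G = Subgroup.closure (Set.range u) := by
    simp only [hG, u, Set.Sum.elim_range, ← Set.union_assoc]
    congr 2
    ext x
    simp [eq_comm]
  rw [hG_eq]
  refine nonempty_closure_range_mulEquiv_symplecticGroup hr he (c := lam) ?_ ?_
  · rw [hlam, hCb_eq, inv_mul_cancel_right₀ hdet]
  · rintro (t | t | ⟨⟨s, t⟩, hst⟩)
    · simp only [u, Sum.elim_inl, huC, weilGenerator, coordMatrix]
      congr!
    · exact (huU t).trans (quadraticPhase_zmodChar_single_self hr _ t).symm
    · exact (huD s t hst).trans (quadraticPhase_single_add_single e s t).symm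
end

section
/- The subgroup R has cardinality r^{1+2ℓ}; every element x ∈ R satisfies x^r = 1; and the center of R equals the commutator subgroup of R and equals the subgroup generated by the scalar unit θ·I, which is cyclic of order r. (In particular R is an extraspecial r-group of exponent r and order r^{1+2ℓ}.) -/
/-!
The matrices `A_t` and `B_t` are the images of the standard generators of the Heisenberg group of
rank `ℓ` over `ZMod r` under its Schrödinger representation on functions `(ZMod r)^ℓ → 𝔽`. This
representation is faithful because the character `x ↦ θ ^ x` of `ZMod r` is, so `R` is isomorphic
to the Heisenberg group, where every claim can be read off the explicit multiplication.
-/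

open Matrix
open scoped commutatorElement

section Transfer

variable {G G' : Type*} [Group G] [Group G']

theorem map_center_mulEquiv (e : G ≃* G') :
    (Subgroup.center G).map (e : G →* G') = Subgroup.center G' := by
  ext x
  rw [Subgroup.mem_map]
  simp only [Subgroup.mem_center_iff]
  constructor
  · rintro ⟨g, hg, rfl⟩ h
    simpa using congrArg e (hg (e.symm h))
  · exact fun hx => ⟨e.symm x, fun g => by simpa using congrArg e.symm (hx (e g)), by simp⟩

theorem map_commutator_mulEquiv (e : G ≃* G') :
    (commutator G).map (e : G →* G') = commutator G' := by
  rw [map_commutator_eq, MonoidHom.range_eq_top.2 e.surjective, commutator_def]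

end Transfer

theorem eq_add_single_iff {ι M : Type*} [DecidableEq ι] [AddZeroClass M] {η ξ : ι → M} {t : ι}
    {x : M} : η = ξ + Pi.single t x ↔ η t = ξ t + x ∧ ∀ i, i ≠ t → η i = ξ i := by
  have hupdate : ξ + Pi.single t x = Function.update ξ t (ξ t + x) := by
    ext i
    obtain rfl | hi := eq_or_ne i t <;> simp [*]
  rw [hupdate, Function.eq_update_iff]

theorem addSubgroup_eq_top_of_single_one_mem {ι : Type*} [Finite ι] [DecidableEq ι] {n : ℕ}
    (S : AddSubgroup (ι → ZMod n)) (hS : ∀ t, Pi.single t 1 ∈ S) : S = ⊤ := by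
  refine (AddSubgroup.toZModSubmodule n).injective (top_le_iff.1 ?_)
  rw [← (Pi.basisFun (ZMod n) ι).span_eq, Submodule.span_le]
  rintro _ ⟨t, rfl⟩
  simpa using hS t

theorem dvd_choose_two_of_odd {n : ℕ} (hn : Odd n) : n ∣ n.choose 2 := by
  rw [Nat.choose_two_right, Nat.mul_div_assoc n (Nat.Odd.sub_odd hn odd_one).two_dvd]
  exact dvd_mul_right n _

theorem zmodChar_injective {M : Type*} [CommMonoid M] {n : ℕ} [NeZero n] {ζ : M}
    (hζ : IsPrimitiveRoot ζ n) : Function.Injective (AddChar.zmodChar n hζ.pow_eq_one) :=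
  fun x y hxy => ZMod.val_injective n (hζ.pow_inj x.val_lt y.val_lt hxy)

/-- The Heisenberg group of rank `ι` over `K`, in polarized coordinates: the element
`⟨c, a, b⟩` stands for the operator taking the basis vector `e_ξ` to `ψ (c + a ⬝ᵥ ξ) • e_(ξ + b)`,
for a fixed additive character `ψ` of `K`. -/
@[ext]
structure HeisenbergGroup (K ι : Type*) where
  phase : K
  freq : ι → K
  shift : ι → K

namespace HeisenbergGroup

variable {K ι : Type*}

section Group

variable [CommRing K]

instance : One (HeisenbergGroup K ι) where
  one := ⟨0, 0, 0⟩

@[simp] theorem one_phase : (1 : HeisenbergGroup K ι).phase = 0 := rfl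

@[simp] theorem one_freq : (1 : HeisenbergGroup K ι).freq = 0 := rfl

@[simp] theorem one_shift : (1 : HeisenbergGroup K ι).shift = 0 := rfl

variable [Fintype ι]

instance : Mul (HeisenbergGroup K ι) where
  mul g h := ⟨g.phase + h.phase + g.freq ⬝ᵥ h.shift, g.freq + h.freq, g.shift + h.shift⟩

instance : Inv (HeisenbergGroup K ι) where
  inv g := ⟨-g.phase + g.freq ⬝ᵥ g.shift, -g.freq, -g.shift⟩

@[simp] theorem mul_phase (g h : HeisenbergGroup K ι) :
    (g * h).phase = g.phase + h.phase + g.freq ⬝ᵥ h.shift := rfl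

@[simp] theorem mul_freq (g h : HeisenbergGroup K ι) : (g * h).freq = g.freq + h.freq := rfl

@[simp] theorem mul_shift (g h : HeisenbergGroup K ι) : (g * h).shift = g.shift + h.shift := rfl

@[simp] theorem inv_phase (g : HeisenbergGroup K ι) :
    g⁻¹.phase = -g.phase + g.freq ⬝ᵥ g.shift := rfl

@[simp] theorem inv_freq (g : HeisenbergGroup K ι) : g⁻¹.freq = -g.freq := rfl

@[simp] theorem inv_shift (g : HeisenbergGroup K ι) : g⁻¹.shift = -g.shift := rfl

instance : Group (HeisenbergGroup K ι) :=
  Group.ofLeftAxioms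
    (fun g h k => by
      ext
      · simp only [mul_phase, mul_freq, mul_shift, add_dotProduct, dotProduct_add]
        ring
      · simp [add_assoc]
      · simp [add_assoc])
    (fun g => by ext <;> simp)
    (fun g => by ext <;> simp)

theorem pow_freq (g : HeisenbergGroup K ι) (n : ℕ) : (g ^ n).freq = n • g.freq := by
  induction n with
  | zero => simp
  | succ n ih => rw [pow_succ, mul_freq, ih, succ_nsmul]

theorem pow_shift (g : HeisenbergGroup K ι) (n : ℕ) : (g ^ n).shift = n • g.shift := by
  induction n with
  | zero => simp
  | succ n ih => rw [pow_succ, mul_shift, ih, succ_nsmul]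

theorem pow_phase (g : HeisenbergGroup K ι) (n : ℕ) :
    (g ^ n).phase = n * g.phase + n.choose 2 * (g.freq ⬝ᵥ g.shift) := by
  induction n with
  | zero => simp
  | succ n ih =>
    rw [pow_succ, mul_phase, ih, pow_freq, smul_dotProduct, nsmul_eq_mul, Nat.choose_succ_succ' n 1,
      Nat.choose_one_right]
    push_cast
    ring

theorem pow_eq_one_of_odd {n : ℕ} [CharP K n] (hn : Odd n) (g : HeisenbergGroup K ι) :
    g ^ n = 1 := by
  have hchoose : (n.choose 2 : K) = 0 := (CharP.cast_eq_zero_iff K n _).2 (dvd_choose_two_of_odd hn)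
  ext <;> simp [pow_phase, pow_freq, pow_shift, hchoose]

theorem mul_comm_iff {g h : HeisenbergGroup K ι} :
    g * h = h * g ↔ g.freq ⬝ᵥ h.shift = h.freq ⬝ᵥ g.shift := by
  simp [HeisenbergGroup.ext_iff, add_comm]

/-- The central embedding of `K`, whose elements the Schrödinger representation turns into
scalars. -/
@[simps apply]
def ofPhase : Multiplicative K →* HeisenbergGroup K ι where
  toFun c := ⟨c.toAdd, 0, 0⟩
  map_one' := rfl
  map_mul' c d := by ext <;> simp

/-- The embedding of the frequencies, whose elements the Schrödinger representation turns into
modulations. -/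
@[simps apply]
def ofFreq : Multiplicative (ι → K) →* HeisenbergGroup K ι where
  toFun a := ⟨0, a.toAdd, 0⟩
  map_one' := rfl
  map_mul' a b := by ext <;> simp

/-- The embedding of the shifts, whose elements the Schrödinger representation turns into
translations. -/
@[simps apply]
def ofShift : Multiplicative (ι → K) →* HeisenbergGroup K ι where
  toFun b := ⟨0, 0, b.toAdd⟩
  map_one' := rfl
  map_mul' a b := by ext <;> simp

theorem ofPhase_injective :
    Function.Injective (ofPhase : Multiplicative K →* HeisenbergGroup K ι) :=
  fun _ _ h => congrArg phase h

theorem eq_ofPhase_mul_ofShift_mul_ofFreq (g : HeisenbergGroup K ι) :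
    g = ofPhase (.ofAdd g.phase) * ofShift (.ofAdd g.shift) * ofFreq (.ofAdd g.freq) := by
  ext <;> simp

theorem commutatorElement_eq (g h : HeisenbergGroup K ι) :
    ⁅g, h⁆ = ofPhase (.ofAdd (g.freq ⬝ᵥ h.shift - h.freq ⬝ᵥ g.shift)) := by
  rw [commutatorElement_def, mul_inv_eq_iff_eq_mul, mul_inv_eq_iff_eq_mul]
  ext
  · simp only [mul_phase, mul_freq, ofPhase_apply, toAdd_ofAdd, zero_dotProduct, zero_add]
    ring
  · simp [add_comm]
  · simp [add_comm]

theorem commutatorElement_ofFreq_ofShift [DecidableEq ι] (t : ι) (c : K) :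
    ⁅ofFreq (.ofAdd (Pi.single t (1 : K))), ofShift (.ofAdd (Pi.single t c))⁆ =
      ofPhase (.ofAdd c) := by
  simp [commutatorElement_eq]

theorem center_eq_range_ofPhase :
    Subgroup.center (HeisenbergGroup K ι) = (ofPhase : Multiplicative K →* _).range := by
  ext g
  rw [Subgroup.mem_center_iff, MonoidHom.mem_range]
  constructor
  · intro hg
    have hfreq : g.freq = 0 := dotProduct_eq_zero _ fun b => by
      simpa using (mul_comm_iff.1 (hg (ofShift (.ofAdd b)))).symm
    have hshift : g.shift = 0 := dotProduct_eq_zero _ fun a => by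
      simpa [dotProduct_comm] using mul_comm_iff.1 (hg (ofFreq (.ofAdd a)))
    exact ⟨.ofAdd g.phase, by ext <;> simp [hfreq, hshift]⟩
  · rintro ⟨c, rfl⟩ h
    simp [mul_comm_iff]

theorem commutator_eq_range_ofPhase [Nonempty ι] :
    commutator (HeisenbergGroup K ι) = (ofPhase : Multiplicative K →* _).range := by
  classical
  apply le_antisymm
  · rw [commutator_def, Subgroup.commutator_le]
    exact fun g _ h _ => ⟨_, (commutatorElement_eq g h).symm⟩
  · rintro _ ⟨c, rfl⟩
    rw [← ofAdd_toAdd c, ← commutatorElement_ofFreq_ofShift (Classical.arbitrary ι)]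
    exact Subgroup.commutator_mem_commutator (Subgroup.mem_top _) (Subgroup.mem_top _)

theorem card_center : Nat.card (Subgroup.center (HeisenbergGroup K ι)) = Nat.card K := by
  rw [center_eq_range_ofPhase]
  exact Nat.card_congr
    ((MonoidHom.ofInjective ofPhase_injective).toEquiv.symm.trans Multiplicative.toAdd)

end Group

/-- The coordinates of the Heisenberg group, as an equivalence with a product. -/
def equivProd : HeisenbergGroup K ι ≃ K × (ι → K) × (ι → K) where
  toFun g := (g.phase, g.freq, g.shift)
  invFun p := ⟨p.1, p.2.1, p.2.2⟩

theorem card_eq [Fintype ι] :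
    Nat.card (HeisenbergGroup K ι) = Nat.card K ^ (1 + 2 * Fintype.card ι) := by
  rw [Nat.card_congr equivProd, Nat.card_prod, Nat.card_prod, Nat.card_fun,
    Nat.card_eq_fintype_card (α := ι)]
  ring

section ZMod

variable {n : ℕ} [Fintype ι]

theorem range_ofPhase_eq_zpowers :
    (ofPhase : Multiplicative (ZMod n) →* HeisenbergGroup (ZMod n) ι).range =
      Subgroup.zpowers (ofPhase (.ofAdd 1)) := by
  have htop : Subgroup.zpowers (Multiplicative.ofAdd (1 : ZMod n)) = ⊤ :=
    (Subgroup.eq_top_iff' _).2 fun c => ⟨c.toAdd.cast, by simp [← ofAdd_zsmul]⟩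
  rw [MonoidHom.range_eq_map, ← htop, MonoidHom.map_zpowers]

theorem center_range_eq_zpowers {G : Type*} [Group G] {f : HeisenbergGroup (ZMod n) ι →* G}
    (hf : Function.Injective f) :
    Subgroup.center f.range = Subgroup.zpowers ⟨f (ofPhase (.ofAdd 1)), _, rfl⟩ := by
  rw [← map_center_mulEquiv (MonoidHom.ofInjective hf), center_eq_range_ofPhase,
    range_ofPhase_eq_zpowers, MonoidHom.map_zpowers]
  rfl

theorem eq_top_of_generators_mem [DecidableEq ι] [Nonempty ι]
    (S : Subgroup (HeisenbergGroup (ZMod n) ι))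
    (hfreq : ∀ t, ofFreq (.ofAdd (Pi.single t 1)) ∈ S)
    (hshift : ∀ t, ofShift (.ofAdd (Pi.single t 1)) ∈ S) : S = ⊤ := by
  have freq_mem (a : ι → ZMod n) : ofFreq (.ofAdd a) ∈ S :=
    (AddSubgroup.eq_top_iff' _).1 (addSubgroup_eq_top_of_single_one_mem
      (Subgroup.toAddSubgroup' (S.comap ofFreq)) hfreq) a
  have shift_mem (b : ι → ZMod n) : ofShift (.ofAdd b) ∈ S :=
    (AddSubgroup.eq_top_iff' _).1 (addSubgroup_eq_top_of_single_one_mem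
      (Subgroup.toAddSubgroup' (S.comap ofShift)) hshift) b
  have phase_mem (c : ZMod n) : ofPhase (.ofAdd c) ∈ S := by
    rw [← commutatorElement_ofFreq_ofShift (Classical.arbitrary ι) c, commutatorElement_def]
    exact mul_mem (mul_mem (mul_mem (freq_mem _) (shift_mem _)) (inv_mem (freq_mem _)))
      (inv_mem (shift_mem _))
  refine (Subgroup.eq_top_iff' S).2 fun g => ?_
  rw [eq_ofPhase_mul_ofShift_mul_ofFreq g]
  exact mul_mem (mul_mem (phase_mem _) (shift_mem _)) (freq_mem _)

theorem closure_generators [DecidableEq ι] [Nonempty ι] :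
    Subgroup.closure
      (Set.range (fun t : ι => ofFreq (.ofAdd (Pi.single t (1 : ZMod n)))) ∪
        Set.range fun t => ofShift (.ofAdd (Pi.single t 1))) = ⊤ :=
  eq_top_of_generators_mem _ (fun t => Subgroup.subset_closure (.inl ⟨t, rfl⟩))
    fun t => Subgroup.subset_closure (.inr ⟨t, rfl⟩)

end ZMod

section Schrodinger

variable [CommRing K] [Fintype K] [DecidableEq K] [Fintype ι] [DecidableEq ι]
  {F : Type*} [Semiring F] (ψ : AddChar K F)

/-- The Schrödinger representation of the Heisenberg group with central character `ψ`, by matrices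
acting on column vectors indexed by `ι → K`. -/
def schrodinger : HeisenbergGroup K ι →* Matrix (ι → K) (ι → K) F where
  toFun g := of fun η ξ => if η = ξ + g.shift then ψ (g.phase + g.freq ⬝ᵥ ξ) else 0
  map_one' := by
    ext η ξ
    simp [one_apply]
  map_mul' g h := by
    ext η ξ
    rw [mul_apply, Finset.sum_eq_single (ξ + h.shift) (fun ζ _ hζ => by simp [hζ]) (by simp)]
    have hphase : (g * h).phase + (g * h).freq ⬝ᵥ ξ =
        (g.phase + g.freq ⬝ᵥ (ξ + h.shift)) + (h.phase + h.freq ⬝ᵥ ξ) := by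
      rw [mul_phase, mul_freq, add_dotProduct, dotProduct_add]
      ring
    have hshift : ξ + (g * h).shift = ξ + h.shift + g.shift := by rw [mul_shift]; abel
    simp only [of_apply, hphase, hshift, ← ψ.map_add_eq_mul, if_true, ite_mul, zero_mul]

theorem schrodinger_apply (g : HeisenbergGroup K ι) (η ξ : ι → K) :
    schrodinger ψ g η ξ = if η = ξ + g.shift then ψ (g.phase + g.freq ⬝ᵥ ξ) else 0 :=
  rfl

theorem schrodinger_ofPhase (c : K) :
    schrodinger ψ (ofPhase (.ofAdd c) : HeisenbergGroup K ι) = ψ c • 1 := by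
  ext η ξ
  simp [schrodinger_apply, one_apply]

theorem schrodinger_ofFreq (a : ι → K) :
    schrodinger ψ (ofFreq (.ofAdd a)) = diagonal fun ξ => ψ (a ⬝ᵥ ξ) := by
  ext η ξ
  obtain rfl | hne := eq_or_ne η ξ <;> simp [schrodinger_apply, *]

theorem schrodinger_ofShift (b η ξ : ι → K) :
    schrodinger ψ (ofShift (.ofAdd b)) η ξ = if η = ξ + b then 1 else 0 := by
  simp [schrodinger_apply]

variable {ψ}

theorem schrodinger_injective (hψ : Function.Injective ψ) :
    Function.Injective (schrodinger (ι := ι) ψ) := by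
  rw [injective_iff_map_eq_one]
  intro g hg
  have hentry (ξ : ι → K) : ψ (g.phase + g.freq ⬝ᵥ ξ) =
      (1 : Matrix (ι → K) (ι → K) F) (ξ + g.shift) ξ := by
    rw [← hg, schrodinger_apply, if_pos rfl]
  have hshift : g.shift = 0 := by
    obtain hF | hF := subsingleton_or_nontrivial F
    · have := hψ.subsingleton
      exact Subsingleton.elim _ _
    · by_contra hne
      exact (ψ.val_isUnit _).ne_zero ((hentry 0).trans (one_apply_ne (by simpa using hne)))
  have hchar (ξ : ι → K) : g.phase + g.freq ⬝ᵥ ξ = 0 :=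
    hψ (by rw [hentry, hshift, add_zero, one_apply_eq, ψ.map_zero_eq_one])
  have hphase : g.phase = 0 := by simpa using hchar 0
  have hfreq : g.freq = 0 := dotProduct_eq_zero _ fun ξ => by simpa [hphase] using hchar ξ
  exact HeisenbergGroup.ext hphase hfreq hshift

end Schrodinger

section RootOfUnity

variable {n : ℕ} [NeZero n] {F : Type*} [CommSemiring F] {θ : F} [Fintype ι] [DecidableEq ι]

/-- The Schrödinger representation over `ZMod n` with central character `x ↦ θ ^ x`, with values
in invertible matrices. -/
def schrodingerUnits (hθ : IsPrimitiveRoot θ n) :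
    HeisenbergGroup (ZMod n) ι →* (Matrix (ι → ZMod n) (ι → ZMod n) F)ˣ :=
  (schrodinger (AddChar.zmodChar n hθ.pow_eq_one)).toHomUnits

variable (hθ : IsPrimitiveRoot θ n)

theorem schrodingerUnits_injective :
    Function.Injective (schrodingerUnits (ι := ι) hθ) :=
  fun _ _ h => schrodinger_injective (zmodChar_injective hθ) (congrArg Units.val h)

theorem coe_schrodingerUnits_ofPhase_one :
    (schrodingerUnits (ι := ι) hθ (ofPhase (.ofAdd 1)) :
        Matrix (ι → ZMod n) (ι → ZMod n) F) = θ • 1 := by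
  have hone : AddChar.zmodChar n hθ.pow_eq_one 1 = θ := by
    simpa using AddChar.zmodChar_apply' hθ.pow_eq_one 1
  exact (schrodinger_ofPhase _ 1).trans (by rw [hone])

theorem coe_schrodingerUnits_ofFreq_single_one (t : ι) :
    (schrodingerUnits hθ (ofFreq (.ofAdd (Pi.single t 1))) :
        Matrix (ι → ZMod n) (ι → ZMod n) F) =
      diagonal fun ξ => θ ^ (ξ t).val :=
  (schrodinger_ofFreq _ _).trans (by simp [AddChar.zmodChar_apply])

theorem coe_schrodingerUnits_ofShift_single_one (t : ι) (η ξ : ι → ZMod n) :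
    (schrodingerUnits hθ (ofShift (.ofAdd (Pi.single t 1))) :
        Matrix (ι → ZMod n) (ι → ZMod n) F) η ξ =
      if η t = ξ t + 1 ∧ ∀ i, i ≠ t → η i = ξ i then 1 else 0 :=
  (schrodinger_ofShift _ _ η ξ).trans (by simp only [eq_add_single_iff])

theorem range_schrodingerUnits [Nonempty ι] :
    (schrodingerUnits hθ).range = Subgroup.closure
      (Set.range (fun t : ι => schrodingerUnits hθ (ofFreq (.ofAdd (Pi.single t 1)))) ∪
        Set.range fun t => schrodingerUnits hθ (ofShift (.ofAdd (Pi.single t 1)))) := by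
  rw [MonoidHom.range_eq_map, ← closure_generators, MonoidHom.map_closure, Set.image_union,
    ← Set.range_comp, ← Set.range_comp]
  rfl

end RootOfUnity

end HeisenbergGroup

open HeisenbergGroup in
theorem weil_R_extraspecial_general
    {r : ℕ} [NeZero r] (hr : Odd r)
    {𝔽 : Type*} [CommSemiring 𝔽] {θ : 𝔽} (hθ : IsPrimitiveRoot θ r)
    {ι : Type*} [Fintype ι] [DecidableEq ι] [Nonempty ι]
    (uA uB : ι → (Matrix (ι → ZMod r) (ι → ZMod r) 𝔽)ˣ)
    (huA : ∀ t, (uA t : Matrix (ι → ZMod r) (ι → ZMod r) 𝔽) = diagonal fun ξ => θ ^ (ξ t).val)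
    (huB : ∀ t η ξ, (uB t : Matrix (ι → ZMod r) (ι → ZMod r) 𝔽) η ξ
      = if η t = ξ t + 1 ∧ ∀ i, i ≠ t → η i = ξ i then 1 else 0)
    (θI : (Matrix (ι → ZMod r) (ι → ZMod r) 𝔽)ˣ)
    (hθI : (θI : Matrix (ι → ZMod r) (ι → ZMod r) 𝔽) = θ • 1)
    (R : Subgroup (Matrix (ι → ZMod r) (ι → ZMod r) 𝔽)ˣ)
    (hR : R = Subgroup.closure (Set.range uA ∪ Set.range uB)) :
    Nat.card R = r ^ (1 + 2 * Fintype.card ι) ∧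
      (∀ x ∈ R, x ^ r = 1) ∧
      ∃ h : θI ∈ R,
        Subgroup.center R = commutator R ∧
        Subgroup.center R = Subgroup.closure {(⟨θI, h⟩ : R)} ∧
        IsCyclic (Subgroup.center R) ∧
        Nat.card (Subgroup.center R) = r := by
  obtain rfl : uA = fun t => schrodingerUnits hθ (ofFreq (.ofAdd (Pi.single t 1))) :=
    funext fun t => Units.ext ((huA t).trans (coe_schrodingerUnits_ofFreq_single_one hθ t).symm)
  obtain rfl : uB = fun t => schrodingerUnits hθ (ofShift (.ofAdd (Pi.single t 1))) := by
    ext t η ξ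
    rw [huB, coe_schrodingerUnits_ofShift_single_one]
  obtain rfl : θI = schrodingerUnits hθ (ofPhase (.ofAdd 1)) :=
    Units.ext (hθI.trans (coe_schrodingerUnits_ofPhase_one hθ).symm)
  obtain rfl : R = (schrodingerUnits hθ).range := hR.trans (range_schrodingerUnits hθ).symm
  let e := MonoidHom.ofInjective (schrodingerUnits_injective (ι := ι) hθ)
  have hcenter := center_range_eq_zpowers (schrodingerUnits_injective (ι := ι) hθ)
  refine ⟨?_, ?_, ⟨_, rfl⟩, ?_, hcenter.trans (Subgroup.zpowers_eq_closure _), ?_, ?_⟩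
  · rw [← Nat.card_congr e.toEquiv, card_eq, Nat.card_zmod]
  · rintro _ ⟨g, rfl⟩
    rw [← map_pow, pow_eq_one_of_odd hr, map_one]
  · rw [← map_center_mulEquiv e, ← map_commutator_mulEquiv e, center_eq_range_ofPhase,
      commutator_eq_range_ofPhase]
  · rw [hcenter]
    infer_instance
  · rw [← Nat.card_congr (Subgroup.centerCongr e).toEquiv, card_center, Nat.card_zmod]

/-- `R` is an extraspecial `r`-group of exponent `r` and order `r^{1+2ℓ}`:
`|R| = r^{1+2ℓ}`, every `x ∈ R` satisfies `x^r = 1`, and the center of `R` equals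
the commutator subgroup of `R` and equals the subgroup generated by `θ·I`,
which is cyclic of order `r`. -/
theorem weil_R_extraspecial
    {r : ℕ} [Fact (Nat.Prime r)] (hr : Odd r)
    {𝔽 : Type*} [Field 𝔽] {θ : 𝔽} (hθ : IsPrimitiveRoot θ r)
    {ℓ : ℕ} (hℓ : 1 ≤ ℓ)
    (uA uB : Fin ℓ → (Matrix (Fin ℓ → ZMod r) (Fin ℓ → ZMod r) 𝔽)ˣ)
    (huA : ∀ t, (uA t : Matrix (Fin ℓ → ZMod r) (Fin ℓ → ZMod r) 𝔽)
      = Matrix.diagonal fun ξ => θ ^ (ξ t).val)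
    (huB : ∀ t η ξ, (uB t : Matrix (Fin ℓ → ZMod r) (Fin ℓ → ZMod r) 𝔽) η ξ
      = if η t = ξ t + 1 ∧ ∀ i, i ≠ t → η i = ξ i then 1 else 0)
    (θI : (Matrix (Fin ℓ → ZMod r) (Fin ℓ → ZMod r) 𝔽)ˣ)
    (hθI : (θI : Matrix (Fin ℓ → ZMod r) (Fin ℓ → ZMod r) 𝔽) = θ • 1)
    (R : Subgroup (Matrix (Fin ℓ → ZMod r) (Fin ℓ → ZMod r) 𝔽)ˣ)
    (hR : R = Subgroup.closure (Set.range uA ∪ Set.range uB)) :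
    Nat.card R = r ^ (1 + 2 * ℓ) ∧
      (∀ x ∈ R, x ^ r = 1) ∧
      ∃ h : θI ∈ R,
        Subgroup.center R = commutator R ∧
        Subgroup.center R = Subgroup.closure {(⟨θI, h⟩ : R)} ∧
        IsCyclic (Subgroup.center R) ∧
        Nat.card (Subgroup.center R) = r := by
  have : NeZero ℓ := ⟨Nat.one_le_iff_ne_zero.1 hℓ⟩
  simpa using weil_R_extraspecial_general hr hθ uA uB huA (by convert huB) θI hθI R hR
end

section
/- The 𝔽-subalgebra of the algebra of square matrices indexed by Fin ℓ → ZMod r generated by the matrices A_t and B_t for 1 ≤ t ≤ ℓ is the full matrix algebra (i.e., the subalgebra generated by {A_1,…,A_ℓ,B_1,…,B_ℓ} equals ⊤). In particular the group R they generate is absolutely irreducible on 𝔽^{r^ℓ}. -/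
/-!
Distinct points of `Fin ℓ → ZMod r` are told apart by the diagonals of the `A t`, because the powers
`θ ^ 0, …, θ ^ (r - 1)` are distinct; Lagrange interpolation then puts every diagonal matrix in the
generated algebra. The `B t` are the permutation matrices of the unit translations, which generate a
transitive group, so for each position `(η, ξ)` the algebra contains a matrix whose `(η, ξ)`-entry
is `1`. Compressing that matrix between two diagonal matrix units yields the matrix unit at
`(η, ξ)`.
-/

open Matrix

section Functions

variable {n F : Type*} [Field F] {S : Subalgebra F (n → F)}

theorem pi_single_one_mem_of_separatesPoints [Finite n] [DecidableEq n]
    (hS : (S : Set (n → F)).SeparatesPoints) (i : n) : Pi.single i 1 ∈ S := by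
  have := Fintype.ofFinite n
  have hvanish : ∀ j, ∃ g ∈ S, g i = 1 ∧ (j ≠ i → g j = 0) := by
    intro j
    obtain rfl | hji := eq_or_ne j i
    · exact ⟨1, S.one_mem, rfl, fun h => (h rfl).elim⟩
    · obtain ⟨f, hfS, hf⟩ := hS hji.symm
      refine ⟨(f i - f j)⁻¹ • (f - algebraMap F (n → F) (f j)),
        S.smul_mem (S.sub_mem hfS (S.algebraMap_mem _)) _, ?_, fun _ => ?_⟩
      · simp [sub_ne_zero.2 hf]
      · simp
  choose g hgS hgi hgj using hvanish
  have hprod : Pi.single i 1 = ∏ j, g j := by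
    ext k
    rw [Finset.prod_apply]
    obtain rfl | hki := eq_or_ne k i
    · simp [hgi]
    · rw [Pi.single_eq_of_ne hki]
      exact (Finset.prod_eq_zero (f := fun j => g j k) (Finset.mem_univ k) (hgj k hki)).symm
  exact hprod ▸ S.prod_mem fun j _ => hgS j

theorem subalgebra_pi_eq_top_of_separatesPoints [Finite n]
    (hS : (S : Set (n → F)).SeparatesPoints) : S = ⊤ := by
  classical
  have := Fintype.ofFinite n
  refine Algebra.eq_top_iff.2 fun f => ?_
  rw [pi_eq_sum_univ' f]
  exact S.sum_mem fun i _ => S.smul_mem (pi_single_one_mem_of_separatesPoints hS i) _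

end Functions

section Matrices

variable {n : Type*} [Fintype n] [DecidableEq n]

theorem subalgebra_matrix_eq_top_of_isUnit_apply {R : Type*} [CommSemiring R]
    {S : Subalgebra R (Matrix n n R)} (hdiag : ∀ i, single i i 1 ∈ S)
    (hentry : ∀ i j, ∃ M ∈ S, IsUnit (M i j)) : S = ⊤ := by
  have hsingle : ∀ i j, single i j 1 ∈ S := by
    intro i j
    obtain ⟨M, hM, u, hu⟩ := hentry i j
    have hcompress : single i j 1 = (↑u⁻¹ : R) • (single i i 1 * M * single j j 1) := by
      simp [single_mul_mul_single, ← hu]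
    exact hcompress ▸ S.smul_mem (S.mul_mem (S.mul_mem (hdiag i) hM) (hdiag j)) _
  refine Algebra.eq_top_iff.2 fun X => ?_
  rw [matrix_eq_sum_single X]
  refine S.sum_mem fun i _ => S.sum_mem fun j _ => ?_
  simpa using S.smul_mem (hsingle i j) (X i j)

variable {F : Type*} [Field F] {D : Set (n → F)}

theorem diagonal_mem_adjoin_of_separatesPoints (hD : D.SeparatesPoints) (d : n → F) :
    diagonal d ∈ Algebra.adjoin F (diagonal '' D) := by
  have htop : Algebra.adjoin F D = ⊤ :=
    subalgebra_pi_eq_top_of_separatesPoints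
      (Set.separatesPoints_mono Algebra.subset_adjoin hD)
  have hmap := AlgHom.map_adjoin (diagonalAlgHom F) D
  rw [htop] at hmap
  exact hmap.le ⟨d, Algebra.mem_top, rfl⟩

theorem permMatrixHom_apply_apply {R : Type*} [NonAssocSemiring R] (σ : Equiv.Perm n) (i j : n) :
    permMatrixHom (R := R) σ i j = if i = σ j then 1 else 0 := by
  simp [Equiv.Perm.inv_def, Equiv.eq_symm_apply, eq_comm]

theorem permMatrixHom_mem_adjoin {R : Type*} [CommSemiring R] {P : Set (Equiv.Perm n)}
    {σ : Equiv.Perm n} (hσ : σ ∈ Subgroup.closure P) :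
    permMatrixHom σ ∈ Algebra.adjoin R (permMatrixHom (R := R) '' P) := by
  rw [← Subgroup.mem_toSubmonoid, Subgroup.closure_toSubmonoid_of_finite] at hσ
  have hle : Submonoid.closure P ≤
      (Algebra.adjoin R (permMatrixHom (R := R) '' P)).toSubmonoid.comap permMatrixHom :=
    Submonoid.closure_le.2 fun τ hτ => Algebra.subset_adjoin ⟨τ, hτ, rfl⟩
  exact hle hσ

theorem adjoin_diagonal_union_permMatrixHom_eq_top (hD : D.SeparatesPoints)
    {P : Set (Equiv.Perm n)} [MulAction.IsPretransitive (Subgroup.closure P) n] :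
    Algebra.adjoin F (diagonal '' D ∪ permMatrixHom '' P) = ⊤ := by
  refine subalgebra_matrix_eq_top_of_isUnit_apply (fun i => ?_) fun i j => ?_
  · rw [← diagonal_single]
    exact Algebra.adjoin_mono Set.subset_union_left
      (diagonal_mem_adjoin_of_separatesPoints hD _)
  · obtain ⟨⟨σ, hσ⟩, hσj : σ j = i⟩ := MulAction.exists_smul_eq (Subgroup.closure P) j i
    refine ⟨permMatrixHom σ,
      Algebra.adjoin_mono Set.subset_union_right (permMatrixHom_mem_adjoin hσ), ?_⟩
    simp [permMatrixHom_apply_apply, hσj]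

end Matrices

theorem isPretransitive_closure_addRight {G : Type*} [AddGroup G] {T : Set G}
    (hT : AddSubgroup.closure T = ⊤) :
    MulAction.IsPretransitive (Subgroup.closure (Equiv.addRight '' T)) G := by
  have haddRight : ∀ v : G, Equiv.addRight v ∈ Subgroup.closure (Equiv.addRight '' T) := by
    intro v
    have hv : v ∈ AddSubgroup.closure T := hT ▸ AddSubgroup.mem_top v
    induction hv using AddSubgroup.closure_induction with
    | mem v hv => exact Subgroup.subset_closure ⟨v, hv, rfl⟩
    | zero => simp
    | add v w _ _ hv hw => simpa using mul_mem hw hv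
    | neg v _ hv => simpa using inv_mem hv
  exact ⟨fun x y => ⟨⟨Equiv.addRight (-x + y), haddRight _⟩, by simp [Subgroup.smul_def]⟩⟩

theorem eq_add_pi_single_iff {ι G : Type*} [DecidableEq ι] [AddZeroClass G] {η ξ : ι → G} {t : ι}
    {a : G} : η = ξ + Pi.single t a ↔ η t = ξ t + a ∧ ∀ i, i ≠ t → η i = ξ i := by
  refine ⟨fun h => ?_, fun ⟨ht, hne⟩ => funext fun i => ?_⟩
  · subst h
    exact ⟨by simp, fun i hi => by simp [hi]⟩
  · obtain rfl | hi := eq_or_ne i t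
    · simp [ht]
    · simp [hi, hne i hi]

section ZModPowers

variable {r : ℕ} {ι : Type*}

theorem addSubgroup_closure_range_pi_single_one [Finite ι] [DecidableEq ι] :
    AddSubgroup.closure (Set.range fun t : ι => (Pi.single t 1 : ι → ZMod r)) = ⊤ := by
  have := Fintype.ofFinite ι
  refine (AddSubgroup.eq_top_iff' _).2 fun v => ?_
  rw [← Finset.univ_sum_single v]
  refine sum_mem fun t _ => ?_
  have hsmul : Pi.single t (v t) = ((v t).cast : ℤ) • (Pi.single t 1 : ι → ZMod r) := by
    simp [← Pi.single_smul]
  rw [hsmul]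
  exact zsmul_mem (AddSubgroup.subset_closure (Set.mem_range_self t)) _

theorem separatesPoints_range_pow_val {M : Type*} [CommMonoid M] [NeZero r] {θ : M}
    (hθ : IsPrimitiveRoot θ r) :
    (Set.range fun (t : ι) (ξ : ι → ZMod r) => θ ^ (ξ t).val).SeparatesPoints := by
  intro ξ η hne
  obtain ⟨t, ht⟩ := Function.ne_iff.1 hne
  exact ⟨_, ⟨t, rfl⟩, fun h =>
    ht (ZMod.val_injective r (hθ.pow_inj (ZMod.val_lt _) (ZMod.val_lt _) h))⟩

end ZModPowers

theorem weil_adjoin_AB_eq_top_general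
    {r : ℕ} [NeZero r]
    {𝔽 : Type*} [Field 𝔽] {θ : 𝔽} (hθ : IsPrimitiveRoot θ r)
    {ι : Type*} [Fintype ι] [DecidableEq ι]
    (A : ι → Matrix (ι → ZMod r) (ι → ZMod r) 𝔽)
    (hA : ∀ t, A t = Matrix.diagonal fun ξ => θ ^ (ξ t).val)
    (B : ι → Matrix (ι → ZMod r) (ι → ZMod r) 𝔽)
    (hB : ∀ t η ξ, B t η ξ =
      if η t = ξ t + 1 ∧ ∀ i, i ≠ t → η i = ξ i then 1 else 0) :
    Algebra.adjoin 𝔽 (Set.range A ∪ Set.range B) = ⊤ := by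
  have hBperm : ∀ t, B t = permMatrixHom (Equiv.addRight (Pi.single t 1)) := by
    intro t
    ext η ξ
    simp only [hB, permMatrixHom_apply_apply, Equiv.coe_addRight, eq_add_pi_single_iff]
  have hrangeA : Set.range A =
      diagonal '' Set.range fun (t : ι) (ξ : ι → ZMod r) => θ ^ (ξ t).val := by
    rw [← Set.range_comp]
    exact congrArg Set.range (funext hA)
  have hrangeB : Set.range B =
      permMatrixHom '' (Equiv.addRight '' Set.range fun t : ι => (Pi.single t 1 : ι → ZMod r)) := by
    rw [← Set.range_comp, ← Set.range_comp]
    exact congrArg Set.range (funext hBperm)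
  have := isPretransitive_closure_addRight
    (addSubgroup_closure_range_pi_single_one (r := r) (ι := ι))
  rw [hrangeA, hrangeB]
  exact adjoin_diagonal_union_permMatrixHom_eq_top (separatesPoints_range_pow_val hθ)

/-- The subalgebra generated by the `A_t` and `B_t` is the full matrix algebra. -/
theorem weil_adjoin_AB_eq_top
    {r : ℕ} [Fact (Nat.Prime r)] (hr : Odd r)
    {𝔽 : Type*} [Field 𝔽] {θ : 𝔽} (hθ : IsPrimitiveRoot θ r)
    {ℓ : ℕ} (hℓ : 1 ≤ ℓ)
    (A : Fin ℓ → Matrix (Fin ℓ → ZMod r) (Fin ℓ → ZMod r) 𝔽)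
    (hA : ∀ t, A t = Matrix.diagonal fun ξ => θ ^ (ξ t).val)
    (B : Fin ℓ → Matrix (Fin ℓ → ZMod r) (Fin ℓ → ZMod r) 𝔽)
    (hB : ∀ t η ξ, B t η ξ =
      if η t = ξ t + 1 ∧ ∀ i, i ≠ t → η i = ξ i then 1 else 0) :
    Algebra.adjoin 𝔽 (Set.range A ∪ Set.range B) = ⊤ :=
  weil_adjoin_AB_eq_top_general hθ A hA B fun t η ξ => (hB t η ξ).trans (by congr)
end

section
/- The trace of U satisfies Tr(U)² = (−1)^{(r−1)/2}·r in 𝔽; equivalently, (∑_{ξ ∈ ZMod r} θ^{ξ.val·(ξ.val+r)/2})² = (−1)^{(r−1)/2}·r. -/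
/-!
With `ψ x = θ ^ (x / 2)`, the trace of `U` is the quadratic Gauss sum `G ψ = ∑ x, ψ (x ^ 2)`.
Substituting `x = u + y` in `G ψ * G ψ⁻¹ = ∑ x, ∑ y, ψ (x ^ 2 - y ^ 2)` turns the summand into
`ψ (u ^ 2) * ψ (2 * u * y)`; summing over `y` leaves only `u = 0`, so the product is `r`.
On the other hand `x ^ 2 = a` has `1 + χ a` solutions, where `χ` is the quadratic character, hence
`G ψ = ∑ a, χ a * ψ a` and `G ψ⁻¹ = χ (-1) * G ψ`. Unlike the usual evaluation of
`(∑ a, χ a * ψ a) ^ 2`, this does not use `∑ a, χ a = 0` for nontrivial `χ`, so it also covers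
coefficients of characteristic two, where `χ` becomes trivial.
-/

section QuadraticGaussSum

open AddChar

variable {F R : Type*} [Fintype F] [CommRing R]

/-- The quadratic Gauss sum of an additive character `ψ`, in its exponential form `∑ x, ψ (x ^ 2)`,
which makes sense over every finite commutative ring. For the form twisted by a multiplicative
character see `gaussSum`. -/
def quadraticGaussSum [CommRing F] (ψ : AddChar F R) : R :=
  ∑ x, ψ (x ^ 2)

theorem quadraticGaussSum_mul_quadraticGaussSum_inv [CommRing F] [IsDomain R]
    (h2 : IsUnit (2 : F)) {ψ : AddChar F R} (hψ : ψ.IsPrimitive) :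
    quadraticGaussSum ψ * quadraticGaussSum ψ⁻¹ = Fintype.card F := by
  classical
  have shift (y : F) :
      ∑ x, ψ (x ^ 2) * ψ⁻¹ (y ^ 2) = ∑ u, ψ (u ^ 2) * ψ (y * (2 * u)) := by
    rw [← Equiv.sum_comp (Equiv.addRight y)]
    refine Finset.sum_congr rfl fun u _ ↦ ?_
    rw [inv_apply, ← map_add_eq_mul, ← map_add_eq_mul, Equiv.coe_addRight]
    congr 1
    ring
  calc quadraticGaussSum ψ * quadraticGaussSum ψ⁻¹
    _ = ∑ y, ∑ x, ψ (x ^ 2) * ψ⁻¹ (y ^ 2) := Finset.sum_mul_sum .. |>.trans Finset.sum_comm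
    _ = ∑ y, ∑ u, ψ (u ^ 2) * ψ (y * (2 * u)) := Finset.sum_congr rfl fun y _ ↦ shift y
    _ = ∑ u, ψ (u ^ 2) * ∑ y, ψ (y * (2 * u)) := by
      rw [Finset.sum_comm]
      simp_rw [Finset.mul_sum]
    _ = Fintype.card F := by
      simp [sum_mulShift _ hψ, h2.mul_right_eq_zero]

variable [Field F] [DecidableEq F] [IsDomain R]

theorem quadraticGaussSum_eq_gaussSum (hF : ringChar F ≠ 2) {ψ : AddChar F R} (hψ : ψ ≠ 1) :
    quadraticGaussSum ψ = gaussSum ((quadraticChar F).ringHomComp (Int.castRingHom R)) ψ := by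
  have card_sqrts (a : F) :
      (Finset.card {x : F | x ^ 2 = a} : R) = (quadraticChar F a : R) + 1 := by
    have h := quadraticChar_card_sqrts hF a
    rw [Set.toFinset_ofPred] at h
    exact_mod_cast congrArg (Int.cast : ℤ → R) h
  calc quadraticGaussSum ψ
    _ = ∑ a, ∑ x with x ^ 2 = a, ψ (x ^ 2) := (Finset.sum_fiberwise ..).symm
    _ = ∑ a, ((quadraticChar F a : R) + 1) * ψ a := by
      refine Finset.sum_congr rfl fun a _ ↦ ?_
      rw [← card_sqrts, ← nsmul_eq_mul, ← Finset.sum_const]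
      exact Finset.sum_congr rfl fun x hx ↦ by rw [(Finset.mem_filter.mp hx).2]
    _ = ∑ a, (quadraticChar F a : R) * ψ a := by
      simp_rw [add_one_mul, Finset.sum_add_distrib, sum_eq_zero_of_ne_one hψ, add_zero]

theorem quadraticChar_neg_one_mul_quadraticGaussSum_inv (hF : ringChar F ≠ 2) {ψ : AddChar F R}
    (hψ : ψ ≠ 1) :
    (quadraticChar F (-1) : R) * quadraticGaussSum ψ⁻¹ = quadraticGaussSum ψ := by
  rw [quadraticGaussSum_eq_gaussSum hF hψ, quadraticGaussSum_eq_gaussSum hF (inv_ne_one.mpr hψ),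
    inv_mulShift]
  simpa using gaussSum_mulShift ((quadraticChar F).ringHomComp (Int.castRingHom R)) ψ (-1)

theorem quadraticGaussSum_sq (hF : ringChar F ≠ 2) {ψ : AddChar F R} (hψ : ψ ≠ 1) :
    quadraticGaussSum ψ ^ 2 = (quadraticChar F (-1) : R) * Fintype.card F := by
  have h2 : IsUnit (2 : F) := (Ring.two_ne_zero hF).isUnit
  calc quadraticGaussSum ψ ^ 2
    _ = (quadraticChar F (-1) : R) * (quadraticGaussSum ψ * quadraticGaussSum ψ⁻¹) := by
      rw [mul_left_comm, quadraticChar_neg_one_mul_quadraticGaussSum_inv hF hψ, sq]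
    _ = (quadraticChar F (-1) : R) * Fintype.card F := by
      rw [quadraticGaussSum_mul_quadraticGaussSum_inv h2 (.of_ne_one hψ)]

end QuadraticGaussSum

theorem quadraticChar_neg_one_eq_pow {F : Type*} [Field F] [Fintype F] [DecidableEq F]
    (hF : ringChar F ≠ 2) : quadraticChar F (-1) = (-1) ^ (Fintype.card F / 2) := by
  rw [quadraticChar_neg_one hF, ZMod.χ₄_eq_neg_one_pow (FiniteField.odd_card_of_char_ne_two hF)]

theorem zmodChar_two_inv_mul_sq {n : ℕ} [NeZero n] (hn : Odd n) {M : Type*} [CommMonoid M] {ζ : M}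
    (hζ : ζ ^ n = 1) (a : ZMod n) :
    AddChar.zmodChar n hζ (2⁻¹ * a ^ 2) = ζ ^ (a.val * (a.val + n) / 2) := by
  have two_dvd : 2 ∣ a.val * (a.val + n) := by
    rcases Nat.even_or_odd a.val with h | h
    · exact h.two_dvd.mul_right _
    · exact (h.add_odd hn).two_dvd.mul_left _
  have two_mul_half : (2 : ZMod n) * (a.val * (a.val + n) / 2 : ℕ) = a ^ 2 := by
    rw [← Nat.cast_ofNat, ← Nat.cast_mul, Nat.mul_div_cancel' two_dvd]
    simp [sq]
  have inv_two_mul_two : (2 : ZMod n)⁻¹ * 2 = 1 := by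
    rw [mul_comm]
    exact ZMod.coe_mul_inv_eq_one 2 hn.coprime_two_left
  rw [← AddChar.zmodChar_apply' hζ, ← two_mul_half, ← mul_assoc, inv_two_mul_two, one_mul]

theorem weil_traceU_sq_general
    {r : ℕ} [Fact (Nat.Prime r)] (hr : Odd r)
    {R : Type*} [CommRing R] [IsDomain R] {θ : R} (hθ : IsPrimitiveRoot θ r)
    (U : Matrix (ZMod r) (ZMod r) R)
    (hU : U = Matrix.diagonal fun ξ : ZMod r => θ ^ (ξ.val * (ξ.val + r) / 2)) :
    U.trace ^ 2 = (-1 : R) ^ ((r - 1) / 2) * (r : R) ∧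
      (∑ ξ : ZMod r, θ ^ (ξ.val * (ξ.val + r) / 2)) ^ 2
        = (-1 : R) ^ ((r - 1) / 2) * (r : R) := by
  have hchar : ringChar (ZMod r) ≠ 2 := by
    rw [ZMod.ringChar_zmod_n]
    exact hr.ne_two_of_dvd_nat dvd_rfl
  have half_eq : r / 2 = (r - 1) / 2 := by grind
  let ψ : AddChar (ZMod r) R := (AddChar.zmodChar r hθ.pow_eq_one).mulShift 2⁻¹
  have hψ : ψ ≠ 1 := AddChar.zmodChar_primitive_of_primitive_root r hθ
    (inv_ne_zero (Ring.two_ne_zero hchar))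
  have sum_eq : ∑ ξ : ZMod r, θ ^ (ξ.val * (ξ.val + r) / 2) = quadraticGaussSum ψ :=
    Finset.sum_congr rfl fun ξ _ ↦ (zmodChar_two_inv_mul_sq hr hθ.pow_eq_one ξ).symm
  have sum_sq : (∑ ξ : ZMod r, θ ^ (ξ.val * (ξ.val + r) / 2)) ^ 2
      = (-1 : R) ^ ((r - 1) / 2) * (r : R) := by
    rw [sum_eq, quadraticGaussSum_sq hchar hψ, quadraticChar_neg_one_eq_pow hchar, ZMod.card,
      half_eq, Int.cast_pow, Int.cast_neg, Int.cast_one]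
  exact ⟨by rw [hU, Matrix.trace_diagonal, sum_sq], sum_sq⟩

/-- `Tr(U)² = (−1)^((r−1)/2)·r`. -/
theorem weil_traceU_sq
    {r : ℕ} [Fact (Nat.Prime r)] (hr : Odd r)
    {𝔽 : Type*} [Field 𝔽] {θ : 𝔽} (hθ : IsPrimitiveRoot θ r)
    (U : Matrix (ZMod r) (ZMod r) 𝔽)
    (hU : U = Matrix.diagonal fun ξ : ZMod r => θ ^ (ξ.val * (ξ.val + r) / 2)) :
    U.trace ^ 2 = (-1 : 𝔽) ^ ((r - 1) / 2) * (r : 𝔽) ∧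
      (∑ ξ : ZMod r, θ ^ (ξ.val * (ξ.val + r) / 2)) ^ 2
        = (-1 : 𝔽) ^ ((r - 1) / 2) * (r : 𝔽) :=
  weil_traceU_sq_general hr hθ U hU
end

section
/- Every element of G commutes with σ: for all g ∈ G, g·σ = σ·g. In particular σ commutes with each generator λ·C_t, U_t (1 ≤ t ≤ ℓ) and D_{st} (1 ≤ s < t ≤ ℓ). -/
/-!
A matrix commutes with a permutation matrix iff it is invariant under permuting rows and columns
simultaneously. For the permutation `ξ ↦ -ξ` this invariance is clear for `C_t` and `D_{st}`, whose
exponents are products of two coordinates. For `U_t` it holds because, `2` being invertible modulo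
the odd number `r`, the exponent `n (n + r) / 2` represents `n ^ 2 / 2`, an even function on
`ZMod r`.
-/

section PermMatrix

variable {α R : Type*} [DecidableEq α]

theorem permMatrix_neg_apply [InvolutiveNeg α] [Zero R] [One R] (i j : α) :
    (Equiv.neg α).permMatrix R i j = if i = -j then 1 else 0 := by
  simp [Equiv.Perm.permMatrix, PEquiv.toMatrix_apply, neg_eq_iff_eq_neg]

variable [Fintype α] [NonAssocSemiring R]

theorem commute_permMatrix_iff {M : Matrix α α R} {e : Equiv.Perm α} :
    Commute M (e.permMatrix R) ↔ M.submatrix e e = M := by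
  rw [commute_iff_eq, PEquiv.mul_toMatrix_toPEquiv, PEquiv.toMatrix_toPEquiv_mul]
  constructor <;> intro h
  · simpa using (congr_arg (Matrix.submatrix · id e) h).symm
  · simpa using (congr_arg (Matrix.submatrix · id e.symm) h).symm

theorem commute_diagonal_permMatrix_iff {d : α → R} {e : Equiv.Perm α} :
    Commute (Matrix.diagonal d) (e.permMatrix R) ↔ d ∘ e = d := by
  rw [commute_permMatrix_iff, Matrix.submatrix_diagonal_equiv, Matrix.diagonal_injective.eq_iff]

end PermMatrix

section QuadraticExponent

variable {r : ℕ}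

theorem two_mul_natCast_val_mul_val_add_div_two (hr : Odd r) (a : ZMod r) :
    2 * ((a.val * (a.val + r) / 2 : ℕ) : ZMod r) = a ^ 2 := by
  have : NeZero r := ⟨hr.pos.ne'⟩
  have h_even : Even (a.val * (a.val + r)) := by grind
  have h_half : 2 * (a.val * (a.val + r) / 2) = a.val * (a.val + r) :=
    Nat.mul_div_cancel' h_even.two_dvd
  simpa [pow_two] using congr_arg (Nat.cast : ℕ → ZMod r) h_half

theorem pow_val_neg_mul_val_neg_add_div_two {M : Type*} [Monoid M] (hr : Odd r) {θ : M}
    (hθ : θ ^ r = 1) (a : ZMod r) :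
    θ ^ ((-a).val * ((-a).val + r) / 2) = θ ^ (a.val * (a.val + r) / 2) := by
  have h_two : IsUnit (2 : ZMod r) := (ZMod.isUnit_iff_coprime 2 r).mpr hr.coprime_two_left
  refine pow_eq_pow_of_modEq ((ZMod.natCast_eq_natCast_iff _ _ _).mp (h_two.mul_left_cancel ?_)) hθ
  simp only [two_mul_natCast_val_mul_val_add_div_two hr, neg_sq]

end QuadraticExponent

section Generators

variable {ι R : Type*} {r : ℕ} [Semiring R]

/-- The matrix `C_t`: the discrete Fourier matrix with kernel `θ ^ (x * y)` acting on the `t`-th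
coordinate, and the identity on all the others. -/
def coordinateFourierMatrix [Fintype ι] [DecidableEq ι] (θ : R) (t : ι) :
    Matrix (ι → ZMod r) (ι → ZMod r) R :=
  Matrix.of fun η ξ => if ∀ i, i ≠ t → η i = ξ i then θ ^ (η t * ξ t).val else 0

/-- The matrix `U_t`: multiplication by the quadratic phase `θ ^ (x ^ 2 / 2)` in the `t`-th
coordinate. The half is represented by the natural number `x (x + r) / 2`, which is an exact
quotient when `r` is odd. -/
def quadraticPhaseMatrix [Fintype ι] (θ : R) (t : ι) : Matrix (ι → ZMod r) (ι → ZMod r) R :=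
  Matrix.diagonal fun ξ => θ ^ ((ξ t).val * ((ξ t).val + r) / 2)

/-- The matrix `D_{st}`: multiplication by the bilinear phase `θ ^ (x * y)` in the `s`-th and
`t`-th coordinates. -/
def bilinearPhaseMatrix [Fintype ι] (θ : R) (s t : ι) : Matrix (ι → ZMod r) (ι → ZMod r) R :=
  Matrix.diagonal fun ξ => θ ^ (ξ s * ξ t).val

variable [NeZero r] [Fintype ι] [DecidableEq ι]

theorem commute_smul_coordinateFourierMatrix_permMatrix_neg (θ c : R) (t : ι) :
    Commute (c • coordinateFourierMatrix θ t) ((Equiv.neg (ι → ZMod r)).permMatrix R) := by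
  rw [commute_permMatrix_iff]
  ext η ξ
  simp [coordinateFourierMatrix]

theorem commute_quadraticPhaseMatrix_permMatrix_neg (hr : Odd r) {θ : R} (hθ : θ ^ r = 1) (t : ι) :
    Commute (quadraticPhaseMatrix θ t) ((Equiv.neg (ι → ZMod r)).permMatrix R) :=
  commute_diagonal_permMatrix_iff.mpr <| funext fun ξ =>
    pow_val_neg_mul_val_neg_add_div_two hr hθ (ξ t)

theorem commute_bilinearPhaseMatrix_permMatrix_neg (θ : R) (s t : ι) :
    Commute (bilinearPhaseMatrix θ s t) ((Equiv.neg (ι → ZMod r)).permMatrix R) :=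
  commute_diagonal_permMatrix_iff.mpr <| funext fun ξ => by simp

end Generators

theorem weil_G_centralizes_sigma_general {r : ℕ} [NeZero r] (hr : Odd r) {R : Type*} [Semiring R]
    {θ : R} (hθ : θ ^ r = 1) {ι : Type*} [Fintype ι] [DecidableEq ι] [LT ι] (c : R)
    (uC uU : ι → (Matrix (ι → ZMod r) (ι → ZMod r) R)ˣ)
    (uD : ι → ι → (Matrix (ι → ZMod r) (ι → ZMod r) R)ˣ)
    (huC : ∀ t, (uC t).val = c • coordinateFourierMatrix θ t)
    (huU : ∀ t, (uU t).val = quadraticPhaseMatrix θ t)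
    (huD : ∀ s t, s < t → (uD s t).val = bilinearPhaseMatrix θ s t)
    (G : Subgroup (Matrix (ι → ZMod r) (ι → ZMod r) R)ˣ)
    (hG : G = Subgroup.closure (Set.range uC ∪ Set.range uU ∪ {x | ∃ s t, s < t ∧ x = uD s t}))
    (σ : (Matrix (ι → ZMod r) (ι → ZMod r) R)ˣ)
    (hσ : σ.val = (Equiv.neg (ι → ZMod r)).permMatrix R) :
    (∀ g ∈ G, Commute g σ) ∧ (∀ t, Commute (uC t) σ) ∧ (∀ t, Commute (uU t) σ) ∧
      (∀ s t, s < t → Commute (uD s t) σ) := by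
  have hC (t : ι) : Commute (uC t) σ := by
    rw [← Commute.units_val_iff, huC, hσ]
    exact commute_smul_coordinateFourierMatrix_permMatrix_neg θ c t
  have hU (t : ι) : Commute (uU t) σ := by
    rw [← Commute.units_val_iff, huU, hσ]
    exact commute_quadraticPhaseMatrix_permMatrix_neg hr hθ t
  have hD (s t : ι) (hst : s < t) : Commute (uD s t) σ := by
    rw [← Commute.units_val_iff, huD s t hst, hσ]
    exact commute_bilinearPhaseMatrix_permMatrix_neg θ s t
  have hG_le : G ≤ Subgroup.centralizer {σ} := by
    rw [hG, Subgroup.closure_le]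
    rintro _ ((⟨t, rfl⟩ | ⟨t, rfl⟩) | ⟨s, t, hst, rfl⟩) <;>
      rw [SetLike.mem_coe, Subgroup.mem_centralizer_singleton_iff]
    exacts [hC t, hU t, hD s t hst]
  exact ⟨fun g hg => Subgroup.mem_centralizer_singleton_iff.mp (hG_le hg), hC, hU, hD⟩

/-- Every element of `G` commutes with `σ`; in particular so does each generator. -/
theorem weil_G_centralizes_sigma
    {r : ℕ} [Fact (Nat.Prime r)] (hr : Odd r)
    {𝔽 : Type*} [Field 𝔽] {θ : 𝔽} (hθ : IsPrimitiveRoot θ r)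
    {ℓ : ℕ} (hℓ : 1 ≤ ℓ)
    (Cb : Matrix (ZMod r) (ZMod r) 𝔽)
    (hCb : ∀ i j : ZMod r, Cb i j = θ ^ (i * j).val)
    (lam : 𝔽) (hlam : lam = (-(r : 𝔽)) ^ ((r - 1) / 2) * Cb.det⁻¹)
    (uC uU : Fin ℓ → (Matrix (Fin ℓ → ZMod r) (Fin ℓ → ZMod r) 𝔽)ˣ)
    (uD : Fin ℓ → Fin ℓ → (Matrix (Fin ℓ → ZMod r) (Fin ℓ → ZMod r) 𝔽)ˣ)
    (huC : ∀ t, (uC t : Matrix (Fin ℓ → ZMod r) (Fin ℓ → ZMod r) 𝔽)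
      = lam • Matrix.of fun η ξ =>
          if ∀ i, i ≠ t → η i = ξ i then θ ^ (η t * ξ t).val else 0)
    (huU : ∀ t, (uU t : Matrix (Fin ℓ → ZMod r) (Fin ℓ → ZMod r) 𝔽)
      = Matrix.diagonal fun ξ => θ ^ ((ξ t).val * ((ξ t).val + r) / 2))
    (huD : ∀ s t : Fin ℓ, s < t →
      (uD s t : Matrix (Fin ℓ → ZMod r) (Fin ℓ → ZMod r) 𝔽)
        = Matrix.diagonal fun ξ => θ ^ (ξ s * ξ t).val)
    (G : Subgroup (Matrix (Fin ℓ → ZMod r) (Fin ℓ → ZMod r) 𝔽)ˣ)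
    (hG : G = Subgroup.closure (Set.range uC ∪ Set.range uU ∪
      {x | ∃ s t : Fin ℓ, s < t ∧ x = uD s t}))
    (σ : (Matrix (Fin ℓ → ZMod r) (Fin ℓ → ZMod r) 𝔽)ˣ)
    (hσ : ∀ η ξ, (σ : Matrix (Fin ℓ → ZMod r) (Fin ℓ → ZMod r) 𝔽) η ξ
      = if η = -ξ then 1 else 0) :
    (∀ g ∈ G, g * σ = σ * g) ∧
      (∀ t, uC t * σ = σ * uC t) ∧ (∀ t, uU t * σ = σ * uU t) ∧
      (∀ s t : Fin ℓ, s < t → uD s t * σ = σ * uD s t) := by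
  -- `convert` identifies the two `Decidable` instances on `∀ i, i ≠ t → η i = ξ i`: the one found
  -- for `Fin ℓ` is not the one for a general `Fintype`.
  exact weil_G_centralizes_sigma_general hr hθ.pow_eq_one lam uC uU uD
    (by unfold coordinateFourierMatrix; convert huC) huU huD G hG σ
    (Matrix.ext fun η ξ => (hσ η ξ).trans (permMatrix_neg_apply η ξ).symm)
end
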